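/- arXiv:1503.06826 — 9 statements merged into one kernel-verified Lean document; each statement's English description precedes it below -/
import Mathlib

section
/- Let G be a finite concurrent game such that for every player A and all plays ρ, ρ', if Occ(ρ) = Occ(ρ') and Inf(ρ) = Inf(ρ') then ρ ∼_A ρ'. Then for every state s and play ρ: if there is a Nash equilibrium from s with outcome ρ, then there is a Nash equilibrium from s whose outcome ρ' has the lasso form ρ' = π·τ^ω for finite sequences π and τ each of length at most |Stat|², and ρ ∼_A ρ' for every player A. -/
/-- A concurrent game: states, players, actions, allowed actions (nonempty),
a deterministic transition table, and a preference relation for each player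
(intended to be a preorder on plays, i.e. on `ℕ → Stat`). -/
structure ConcGame (Stat Agt Act : Type) where
  Allow : Stat → Agt → Set Act
  Allow_nonempty : ∀ s A, (Allow s A).Nonempty
  Tab : Stat → (Agt → Act) → Stat
  pref : Agt → (ℕ → Stat) → (ℕ → Stat) → Prop

namespace ConcGame

variable {Stat Agt Act : Type}

/-- A move is legal at a state if every player's action is allowed there. -/
def Legal (G : ConcGame Stat Agt Act) (s : Stat) (m : Agt → Act) : Prop :=
  ∀ A, m A ∈ G.Allow s A

/-- A strategy for player `A` maps a history (the list of previously visited
states) together with the current state to an allowed action. -/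
def IsStrategy (G : ConcGame Stat Agt Act) (A : Agt) (σ : List Stat → Stat → Act) : Prop :=
  ∀ h s, σ h s ∈ G.Allow s A

/-- A strategy profile assigns a strategy to every player. -/
def IsProfile (G : ConcGame Stat Agt Act) (σ : Agt → List Stat → Stat → Act) : Prop :=
  ∀ A, G.IsStrategy A (σ A)

/-- The run of a strategy profile from a state: current state together with
the history of previously visited states. -/
def run (G : ConcGame Stat Agt Act) (σ : Agt → List Stat → Stat → Act) (s : Stat) :
    ℕ → Stat × List Stat
  | 0 => (s, [])
  | n + 1 =>
    let p := run G σ s n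
    (G.Tab p.1 (fun A => σ A p.2 p.1), p.2 ++ [p.1])

/-- The unique infinite outcome of a strategy profile from a state. -/
def outcome (G : ConcGame Stat Agt Act) (σ : Agt → List Stat → Stat → Act) (s : Stat)
    (n : ℕ) : Stat :=
  (run G σ s n).1

/-- Nash equilibrium from `s`: no player can unilaterally improve her outcome. -/
def IsNash [DecidableEq Agt] (G : ConcGame Stat Agt Act) (s : Stat)
    (σ : Agt → List Stat → Stat → Act) : Prop :=
  G.IsProfile σ ∧
    ∀ A τ, G.IsStrategy A τ →
      G.pref A (G.outcome (Function.update σ A τ) s) (G.outcome σ s)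

end ConcGame

/-- The set of states occurring along a play. -/
def Occ {α : Type} (ρ : ℕ → α) : Set α := Set.range ρ

/-- The set of states occurring infinitely often along a play. -/
def InfOcc {α : Type} (ρ : ℕ → α) : Set α := {x | ∀ n, ∃ m, n ≤ m ∧ ρ m = x}

theorem path_gen {κ : Type} (K : ℕ → κ) : ∀ k I : ℕ, ∃ (L : ℕ) (f : ℕ → ℕ),
    K (f 0) = K I ∧ f L = I + k ∧ (∀ n ≤ L, I ≤ f n ∧ f n ≤ I + k) ∧
    (∀ n < L, K (f (n+1)) = K (f n + 1)) ∧
    (∀ a ≤ L, ∀ b ≤ L, K (f a) = K (f b) → a = b) := by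
  classical
  intro k
  induction k using Nat.strong_induction_on with
  | _ k ih =>
    intro I
    let P : ℕ → Prop := fun j => K (I + j) = K I
    have hP : P (Nat.findGreatest P k) := Nat.findGreatest_spec (m := 0) (Nat.zero_le _) rfl
    have hmax : ∀ j, Nat.findGreatest P k < j → j ≤ k → ¬ P j :=
      fun j h1 h2 => Nat.findGreatest_is_greatest h1 h2
    have hle : Nat.findGreatest P k ≤ k := Nat.findGreatest_le k
    generalize Nat.findGreatest P k = i at hP hmax hle
    by_cases hik : i = k
    · subst hik
      refine ⟨0, fun _ => I + i, hP, rfl, ?_, ?_, ?_⟩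
      · intro n _; constructor <;> simp
      · intro n hn; omega
      · intro a ha b hb _; omega
    · obtain ⟨L, f, h0, hL, hb, hs, hi⟩ := ih (k - (i+1)) (by omega) (I + (i+1))
      have hne : ∀ n ≤ L, K (f n) ≠ K I := by
        intro n hn he
        have h1 := hb n hn
        refine hmax (f n - I) (by omega) (by omega) ?_
        change K (I + (f n - I)) = K I
        rw [← he]; congr 1; omega
      refine ⟨L+1, fun n => match n with | 0 => I + i | n+1 => f n, hP, ?_, ?_, ?_, ?_⟩
      · change f L = _
        omega
      · rintro (_ | n) hn
        · change I ≤ I + i ∧ I + i ≤ I + k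
          omega
        · have := hb n (by omega)
          change I ≤ f n ∧ f n ≤ I + k
          omega
      · rintro (_ | n) hn
        · exact h0
        · exact hs n (by omega)
      · rintro (_ | a) ha (_ | b) hb' he
        · rfl
        · exact absurd (he.symm.trans hP) (hne b (by omega))
        · exact absurd (he.trans hP) (hne a (by omega))
        · rw [hi a (by omega) b (by omega) he]

theorem path_play {Stat : Type} [Fintype Stat] (ρ : ℕ → Stat) (I J : ℕ) (hIJ : I ≤ J) :
    ∃ (L : ℕ) (f : ℕ → ℕ), L + 1 ≤ Fintype.card Stat ^ 2 ∧ ρ (f 0) = ρ I ∧ f L = J ∧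
      (∀ n ≤ L, I ≤ f n ∧ f n ≤ J) ∧
      (∀ n < L, ρ (f (n+1)) = ρ (f n + 1)) ∧
      (∀ n ≤ L, (fun i => ρ (f i)) '' Set.Iic n = ρ '' Set.Icc I (f n)) := by
  classical
  obtain ⟨L, f, h0, hL, hb, hs, hi⟩ :=
    path_gen (fun j => (ρ j, ρ '' Set.Icc I j)) (J - I) I
  have hJ : I + (J - I) = J := by omega
  rw [hJ] at hL hb
  simp only [Prod.mk.injEq] at h0 hs hi
  refine ⟨L, f, ?_, h0.1, hL, hb, fun n hn => (hs n hn).1, ?_⟩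
  · have hpos : ∀ j, I ≤ j → 0 < (ρ '' Set.Icc I j).ncard := by
      intro j hj
      rw [Set.ncard_pos (Set.toFinite _)]
      exact ⟨ρ I, I, ⟨le_refl _, hj⟩, rfl⟩
    have hcard : ∀ j, (ρ '' Set.Icc I j).ncard ≤ Fintype.card Stat := by
      intro j
      rw [← Nat.card_eq_fintype_card]
      exact Set.ncard_le_card _
    have hfin : ∀ n : Fin (L+1), (ρ '' Set.Icc I (f n)).ncard - 1 < Fintype.card Stat := by
      intro n
      have h1 := hpos (f n) (hb n (by omega)).1
      have h2 := hcard (f n)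
      omega
    let φ : Fin (L+1) → Stat × Fin (Fintype.card Stat) := fun n =>
      (ρ (f n), ⟨(ρ '' Set.Icc I (f n)).ncard - 1, hfin n⟩)
    have hφ : Function.Injective φ := by
      intro a b hab
      simp only [φ, Prod.mk.injEq, Fin.mk.injEq] at hab
      have h1 := hpos (f a) (hb a (by omega)).1
      have h2 := hpos (f b) (hb b (by omega)).1
      have h3 : (ρ '' Set.Icc I (f a)).ncard = (ρ '' Set.Icc I (f b)).ncard := by omega
      apply Fin.ext
      apply hi a (by omega) b (by omega)
      refine ⟨hab.1, ?_⟩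
      rcases le_total (f a) (f b) with h | h
      · exact Set.eq_of_subset_of_ncard_le (Set.image_mono (Set.Icc_subset_Icc_right h))
          h3.ge (Set.toFinite _)
      · exact (Set.eq_of_subset_of_ncard_le (Set.image_mono (Set.Icc_subset_Icc_right h))
          h3.le (Set.toFinite _)).symm
    have := Fintype.card_le_of_injective φ hφ
    simpa [sq] using this
  · intro n
    induction n with
    | zero =>
      intro _
      rw [h0.2]
      ext x
      simp [h0.1, eq_comm]
    | succ n ih =>
      intro hn
      rw [(hs n (by omega)).2]
      have e1 : Set.Iic (n+1) = insert (n+1) (Set.Iic n) := by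
        ext x; simp only [Set.mem_Iic, Set.mem_insert_iff]; omega
      have h4 := (hb n (by omega)).1
      have e2 : Set.Icc I (f n + 1) = insert (f n + 1) (Set.Icc I (f n)) := by
        ext x; simp only [Set.mem_Icc, Set.mem_insert_iff]; omega
      rw [e1, e2, Set.image_insert_eq, Set.image_insert_eq, ih (by omega), (hs n (by omega)).1]

theorem lasso_exists {Stat : Type} [Fintype Stat] (ρ : ℕ → Stat) :
    ∃ (L M : ℕ) (f g F : ℕ → ℕ), L + 1 ≤ Fintype.card Stat ^ 2 ∧ M + 1 ≤ Fintype.card Stat ^ 2 ∧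
      (∀ n, F n = if n < L + 1 then f n else g ((n - (L+1)) % (M+1))) ∧
      ρ (F 0) = ρ 0 ∧ (∀ n, ρ (F (n+1)) = ρ (F n + 1)) ∧
      (∀ n, (fun i => ρ (F i)) '' Set.Iic n = ρ '' Set.Iic (F n)) ∧
      Occ ρ = Occ (fun i => ρ (F i)) ∧ InfOcc ρ = InfOcc (fun i => ρ (F i)) := by
  classical
  have hJ : ∀ᶠ J in Filter.atTop, ∀ x : Stat,
      (x ∈ Occ ρ → x ∈ ρ '' Set.Iic J) ∧ (∀ i, J < i → ρ i = x → x ∈ InfOcc ρ) := by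
    rw [Filter.eventually_all]
    intro x
    refine Filter.Eventually.and ?_ ?_
    · by_cases hx : x ∈ Occ ρ
      · obtain ⟨m, rfl⟩ := hx
        filter_upwards [Filter.eventually_ge_atTop m] with J hJ _
        exact ⟨m, hJ, rfl⟩
      · exact Filter.Eventually.of_forall fun J h => absurd h hx
    · by_cases hx : x ∈ InfOcc ρ
      · exact Filter.Eventually.of_forall fun J i _ _ => hx
      · have hx' := hx
        simp only [InfOcc, Set.mem_ofPred_eq, not_forall, not_exists, not_and] at hx'
        obtain ⟨m, hm⟩ := hx'
        filter_upwards [Filter.eventually_ge_atTop m] with J hJ i hi h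
        exact absurd h (hm i (by omega))
  obtain ⟨J, hJ⟩ := hJ.exists
  have hJ' : ∀ᶠ J' in Filter.atTop, ∀ x : Stat,
      (x ∈ InfOcc ρ → x ∈ ρ '' Set.Icc (J+1) J') := by
    rw [Filter.eventually_all]
    intro x
    by_cases hx : x ∈ InfOcc ρ
    · obtain ⟨m, hm, rfl⟩ := hx (J+1)
      filter_upwards [Filter.eventually_ge_atTop m] with J' hJ' _
      exact ⟨m, ⟨hm, hJ'⟩, rfl⟩
    · exact Filter.Eventually.of_forall fun J h => absurd h hx
  obtain ⟨B, hB⟩ := Filter.eventually_atTop.1 hJ'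
  have hinf : ρ (J+1) ∈ InfOcc ρ := (hJ (ρ (J+1))).2 (J+1) (by omega) rfl
  obtain ⟨J1, hJ1, hJ1e⟩ := hinf (B + J + 2)
  obtain ⟨J', rfl⟩ : ∃ J', J1 = J' + 1 := ⟨J1 - 1, by omega⟩
  have hB' := hB J' (by omega)
  obtain ⟨L, f, hLc, hf0, hfL, hfb, hfs, hfi⟩ := path_play ρ 0 J (by omega)
  obtain ⟨M, g, hMc, hg0, hgL, hgb, hgs, hgi⟩ := path_play ρ (J+1) J' (by omega)
  have key : ∃ F : ℕ → ℕ, ∀ n, F n = if n < L + 1 then f n else g ((n - (L+1)) % (M+1)) :=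
    ⟨_, fun _ => rfl⟩
  obtain ⟨F, hF⟩ := key
  have hF1 : ∀ n ≤ L, F n = f n := fun n hn => by rw [hF, if_pos (by omega)]
  have hF2 : ∀ n, F (L + 1 + n) = g (n % (M+1)) := fun n => by
    rw [hF, if_neg (by omega)]; congr 2; omega
  have hgmod : ∀ n, J + 1 ≤ g (n % (M+1)) := fun n =>
    (hgb _ (by have : n % (M+1) < M+1 := Nat.mod_lt n (Nat.succ_pos M); omega)).1
  have hIcc : ∀ n, Set.Icc 0 n = Set.Iic n := fun n => by ext; simp
  have hpre : ∀ n ≤ L, (fun i => ρ (F i)) '' Set.Iic n = ρ '' Set.Iic (F n) := by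
    intro n hn
    rw [hF1 n hn, ← hIcc (f n), ← hfi n hn]
    apply Set.image_congr
    intro i hi
    simp only [Set.mem_Iic] at hi
    simp only [hF1 i (by omega)]
  have hOccL : Occ ρ ⊆ (fun i => ρ (F i)) '' Set.Iic L := by
    intro x hx
    rw [hpre L le_rfl, hF1 L le_rfl, hfL]
    exact (hJ x).1 hx
  refine ⟨L, M, f, g, F, hLc, hMc, hF, ?_, ?_, ?_, ?_, ?_⟩
  · rw [hF1 0 (by omega), hf0]
  · intro n
    rcases lt_trichotomy n L with h | h | h
    · rw [hF1 _ (by omega), hF1 _ (by omega), hfs n h]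
    · subst h
      rw [hF1 n le_rfl, hfL]
      have := hF2 0
      simp only [add_zero, Nat.zero_mod] at this
      rw [this, hg0]
    · obtain ⟨k, rfl⟩ : ∃ k, n = L + 1 + k := ⟨n - (L+1), by omega⟩
      rw [add_assoc, hF2, hF2]
      have hlt : k % (M+1) < M+1 := Nat.mod_lt k (Nat.succ_pos M)
      by_cases hk : k % (M+1) = M
      · have h1 : (k+1) % (M+1) = 0 := by
          rw [Nat.add_mod, hk]
          rcases M with _ | M
          · simp
          · rw [Nat.mod_eq_of_lt (a := 1) (by omega)]; simp
        rw [h1, hk, hg0, hgL, hJ1e]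
      · have h1 : (k+1) % (M+1) = k % (M+1) + 1 := by
          rw [Nat.add_mod]
          rw [Nat.mod_eq_of_lt (a := 1) (by omega), Nat.mod_eq_of_lt (by omega)]
        rw [h1, hgs _ (by omega)]
  · intro n
    by_cases hn : n ≤ L
    · exact hpre n hn
    · apply Set.Subset.antisymm
      · rintro _ ⟨i, _, rfl⟩
        obtain ⟨k, rfl⟩ : ∃ k, n = L + 1 + k := ⟨n - (L+1), by omega⟩
        obtain ⟨j, hj, hje⟩ := (hJ (ρ (F i))).1 ⟨_, rfl⟩
        refine ⟨j, ?_, hje⟩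
        simp only [Set.mem_Iic] at hj ⊢
        rw [hF2]
        have := hgmod k
        omega
      · rintro _ ⟨i, _, rfl⟩
        obtain ⟨j, hj, hje⟩ := hOccL ⟨i, rfl⟩
        refine ⟨j, ?_, hje⟩
        simp only [Set.mem_Iic] at hj ⊢
        omega
  · apply Set.Subset.antisymm
    · intro x hx
      obtain ⟨j, _, hje⟩ := hOccL hx
      exact ⟨j, hje⟩
    · rintro _ ⟨i, rfl⟩
      exact ⟨_, rfl⟩
  · apply Set.Subset.antisymm
    · intro x hx n
      have h1 := hB' x hx
      rw [← hgL, ← hgi M le_rfl] at h1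
      obtain ⟨i, hi, hie⟩ := h1
      simp only [Set.mem_Iic] at hi
      refine ⟨L + 1 + (i + (M+1) * n), by nlinarith, ?_⟩
      simp only [hF2]
      rw [Nat.add_mul_mod_self_left, Nat.mod_eq_of_lt (by omega)]
      exact hie
    · intro x hx
      obtain ⟨m, hm, hme⟩ := hx (L+1)
      obtain ⟨k, rfl⟩ : ∃ k, m = L + 1 + k := ⟨m - (L+1), by omega⟩
      simp only [hF2] at hme
      exact (hJ x).2 _ (by have := hgmod k; omega) hme

namespace ConcGame

theorem run_eq {Stat Agt Act : Type} (G : ConcGame Stat Agt Act)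
    (σ : Agt → List Stat → Stat → Act) (s : Stat) (n : ℕ) :
    G.run σ s n = (G.outcome σ s n, (List.range n).map (G.outcome σ s)) := by
  induction n with
  | zero => rfl
  | succ n ih =>
    refine Prod.ext rfl ?_
    change (G.run σ s n).2 ++ [(G.run σ s n).1] = _
    rw [ih, List.range_succ, List.map_append]
    rfl

theorem outcome_succ {Stat Agt Act : Type} (G : ConcGame Stat Agt Act)
    (σ : Agt → List Stat → Stat → Act) (s : Stat) (n : ℕ) :
    G.outcome σ s (n+1) = G.Tab (G.outcome σ s n)
      (fun A => σ A ((List.range n).map (G.outcome σ s)) (G.outcome σ s n)) := by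
  change G.Tab (G.run σ s n).1 (fun A => σ A (G.run σ s n).2 (G.run σ s n).1) = _
  rw [run_eq]

theorem outcome_unique {Stat Agt Act : Type} (G : ConcGame Stat Agt Act)
    (σ : Agt → List Stat → Stat → Act) (s : Stat) (o : ℕ → Stat) (h0 : o 0 = s)
    (hs : ∀ n, o (n+1) = G.Tab (o n) (fun A => σ A ((List.range n).map o) (o n))) :
    G.outcome σ s = o := by
  have : ∀ n, G.run σ s n = (o n, (List.range n).map o) := by
    intro n
    induction n with
    | zero => rw [h0]; rfl
    | succ n ih =>
      change (G.Tab (G.run σ s n).1 (fun A => σ A (G.run σ s n).2 (G.run σ s n).1),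
        (G.run σ s n).2 ++ [(G.run σ s n).1]) = _
      rw [ih, hs, List.range_succ, List.map_append]
      rfl
  funext n
  change (G.run σ s n).1 = _
  rw [this]

open Classical in
/-- Length of the agreement with the reference play. -/
noncomputable def agr {Stat : Type} (ρ' : ℕ → Stat) (h : List Stat) (x : Stat) : ℕ :=
  Nat.findGreatest (fun k => ∀ i ≤ k, (h ++ [x]).getD i x = ρ' i) h.length

/-- Translated history. -/
noncomputable def trHist {Stat : Type} (ρ : ℕ → Stat) (F : ℕ → ℕ) (h : List Stat) (x : Stat) :
    List Stat :=
  (List.range (F (agr (fun i => ρ (F i)) h x))).map ρ ++ h.drop (agr (fun i => ρ (F i)) h x)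

theorem getD_play {Stat : Type} (o : ℕ → Stat) (m i : ℕ) (hi : i ≤ m) (x : Stat) :
    ((List.range m).map o ++ [o m]).getD i x = o i := by
  have : (List.range m).map o ++ [o m] = (List.range (m+1)).map o := by
    rw [List.range_succ, List.map_append]; rfl
  rw [this, List.getD_eq_getElem _ _ (by simp; omega)]
  simp

theorem agr_eq {Stat : Type} (ρ' o : ℕ → Stat) (n k : ℕ) (h1 : ∀ i ≤ n, o i = ρ' i)
    (h2 : o (n+1) ≠ ρ' (n+1) ∨ k = 0) :
    agr ρ' ((List.range (n+k)).map o) (o (n+k)) = n := by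
  classical
  unfold agr
  rw [Nat.findGreatest_eq_iff]
  simp only [List.length_map, List.length_range]
  refine ⟨by omega, fun _ i hi => ?_, fun m hm hmk hall => ?_⟩
  · rw [getD_play _ _ _ (by omega), h1 i hi]
  · rcases h2 with h2 | h2
    · have := hall (n+1) (by omega)
      rw [getD_play _ _ _ (by omega)] at this
      exact h2 this
    · omega

theorem drop_play {Stat : Type} (q : ℕ → Stat) (n k : ℕ) :
    ((List.range (n+k)).map q).drop n = (List.range k).map (fun i => q (n+i)) := by
  rw [List.range_add, List.map_append, List.drop_left' (by simp), List.map_map]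
  rfl

theorem split_play {Stat : Type} (q : ℕ → Stat) (n k : ℕ) :
    (List.range (n+k)).map q = (List.range n).map q ++ (List.range k).map (fun i => q (n+i)) := by
  rw [List.range_add, List.map_append, List.map_map]
  rfl

theorem transfer {Stat Agt Act : Type} [DecidableEq Agt]
    (G : ConcGame Stat Agt Act)
    (hrefl : ∀ A ρ, G.pref A ρ ρ)
    (htrans : ∀ A ρ₁ ρ₂ ρ₃, G.pref A ρ₁ ρ₂ → G.pref A ρ₂ ρ₃ → G.pref A ρ₁ ρ₃)
    (hG : ∀ A (ρ ρ' : ℕ → Stat), Occ ρ = Occ ρ' → InfOcc ρ = InfOcc ρ' →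
      G.pref A ρ ρ' ∧ G.pref A ρ' ρ)
    (s : Stat) (ρ : ℕ → Stat) (σ : Agt → List Stat → Stat → Act)
    (hNE : G.IsNash s σ) (hout : G.outcome σ s = ρ) (F : ℕ → ℕ)
    (hF0 : ρ (F 0) = ρ 0) (hFs : ∀ n, ρ (F (n+1)) = ρ (F n + 1))
    (hFi : ∀ n, (fun i => ρ (F i)) '' Set.Iic n = ρ '' Set.Iic (F n))
    (hO : Occ ρ = Occ (fun i => ρ (F i))) (hI : InfOcc ρ = InfOcc (fun i => ρ (F i))) :
    ∃ σ', G.IsNash s σ' ∧ G.outcome σ' s = fun i => ρ (F i) := by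
  classical
  have hρ0 : ρ 0 = s := by rw [← hout]; rfl
  have hρs : ∀ n, ρ (n+1) = G.Tab (ρ n) (fun A => σ A ((List.range n).map ρ) (ρ n)) := by
    intro n
    have := outcome_succ G σ s n
    rwa [hout] at this
  have key : ∃ σ' : Agt → List Stat → Stat → Act, ∀ A h x, σ' A h x = σ A (trHist ρ F h x) x :=
    ⟨_, fun _ _ _ => rfl⟩
  obtain ⟨σ', hσ'⟩ := key
  have hout' : G.outcome σ' s = fun i => ρ (F i) := by
    apply outcome_unique
    · rw [hF0, hρ0]
    · intro n
      have ha := agr_eq (fun i => ρ (F i)) (fun i => ρ (F i)) n 0 (fun _ _ => rfl) (Or.inr rfl)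
      simp only [add_zero] at ha
      simp only [hσ', trHist, ha]
      rw [hFs, hρs]
      have hd := drop_play (fun i => ρ (F i)) n 0
      simp only [add_zero, List.range_zero, List.map_nil] at hd
      simp only [hd, List.append_nil]
  refine ⟨σ', ⟨fun A h x => by rw [hσ']; exact hNE.1 A _ _, ?_⟩, hout'⟩
  intro A τ hτ
  rw [hout']
  have hos := outcome_succ G (Function.update σ' A τ) s
  have ho0 : G.outcome (Function.update σ' A τ) s 0 = s := rfl
  generalize G.outcome (Function.update σ' A τ) s = o at hos ho0
  by_cases heq : ∀ n, o n = ρ (F n)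
  · have : o = fun i => ρ (F i) := funext heq
    rw [this]; exact hrefl _ _
  push Not at heq
  have hmin : ∀ i < Nat.find heq, o i = ρ (F i) := fun i hi => not_not.1 (Nat.find_min heq hi)
  have hne := Nat.find_spec heq
  generalize Nat.find heq = m at hmin hne
  rcases m with _ | n
  · exact absurd (by rw [ho0, hF0, hρ0]) hne
  have hmin' : ∀ i ≤ n, o i = ρ (F i) := fun i hi => hmin i (by omega)
  have keyq : ∃ q : ℕ → Stat, ∀ i, q i = if i ≤ F n then ρ i else o (i - F n + n) :=
    ⟨_, fun _ => rfl⟩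
  obtain ⟨q, hq⟩ := keyq
  have hq1 : ∀ i ≤ F n, q i = ρ i := fun i hi => by rw [hq, if_pos hi]
  have hq2 : ∀ k, q (F n + k) = o (n + k) := by
    intro k
    rcases k with _ | k
    · rw [add_zero, add_zero, hq1 _ le_rfl, hmin' n le_rfl]
    · rw [hq, if_neg (by omega)]; congr 1; omega
  have keyt : ∃ τ' : List Stat → Stat → Act, ∀ h x, τ' h x = if h.length < F n then σ A h x
      else τ ((List.range n).map (fun i => ρ (F i)) ++ h.drop (F n)) x := ⟨_, fun _ _ => rfl⟩
  obtain ⟨τ', hτ'⟩ := keyt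
  have hτs : G.IsStrategy A τ' := by
    intro h x
    rw [hτ']
    split_ifs
    · exact hNE.1 A _ _
    · exact hτ _ _
  have hqo : G.outcome (Function.update σ A τ') s = q := by
    apply outcome_unique
    · rw [hq1 _ (by omega), hρ0]
    · intro i
      by_cases hi : i < F n
      · rw [hq1 _ (by omega), hq1 _ (by omega), hρs]
        have hm : (List.range i).map q = (List.range i).map ρ := by
          apply List.map_congr_left
          intro j hj
          rw [List.mem_range] at hj
          exact hq1 j (by omega)
        rw [hm]
        congr 1
        funext B
        by_cases hB : B = A
        · subst hB
          rw [Function.update_self, hτ', if_pos (by simpa using hi)]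
        · rw [Function.update_of_ne hB]
      · obtain ⟨k, rfl⟩ : ∃ k, i = F n + k := ⟨i - F n, by omega⟩
        rw [add_assoc, hq2, hq2, ← add_assoc, hos]
        congr 1
        funext B
        have hqd : (fun j => q (F n + j)) = fun j => o (n + j) := funext hq2
        by_cases hB : B = A
        · subst hB
          rw [Function.update_self, Function.update_self, hτ', if_neg (by simp), drop_play, hqd,
            split_play o]
          congr 2
          apply List.map_congr_left
          intro j hj
          rw [List.mem_range] at hj
          exact hmin' j (by omega)
        · rw [Function.update_of_ne hB, Function.update_of_ne hB, hσ', trHist,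
            agr_eq (fun i => ρ (F i)) o n k hmin' (Or.inl hne), drop_play, split_play q, hqd]
          congr 2
          apply List.map_congr_left
          intro j hj
          rw [List.mem_range] at hj
          exact (hq1 j (by omega)).symm
  have hpq : G.pref A q ρ := by
    have := hNE.2 A τ' hτs
    rwa [hqo, hout] at this
  have hoq : G.pref A o q := by
    refine (hG A o q ?_ ?_).1
    · apply Set.Subset.antisymm
      · rintro _ ⟨i, rfl⟩
        by_cases hi : i ≤ n
        · have : o i ∈ ρ '' Set.Iic (F n) := by
            rw [← hFi]; exact ⟨i, hi, (hmin' i hi).symm⟩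
          obtain ⟨j, hj, hje⟩ := this
          exact ⟨j, by rw [hq1 j hj, hje]⟩
        · refine ⟨F n + (i - n), ?_⟩
          rw [hq2]; congr 1; omega
      · rintro _ ⟨i, rfl⟩
        by_cases hi : i ≤ F n
        · have : q i ∈ (fun i => ρ (F i)) '' Set.Iic n := by
            rw [hFi]; exact ⟨i, hi, (hq1 i hi).symm⟩
          obtain ⟨j, hj, hje⟩ := this
          exact ⟨j, by rw [hmin' j hj]; exact hje⟩
        · refine ⟨n + (i - F n), ?_⟩
          rw [← hq2]; congr 1; omega
    · ext x
      constructor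
      · intro hx N
        obtain ⟨m, hm, rfl⟩ := hx (n + N)
        refine ⟨F n + (m - n), by omega, ?_⟩
        rw [hq2]; congr 1; omega
      · intro hx N
        obtain ⟨m, hm, rfl⟩ := hx (F n + N)
        refine ⟨n + (m - F n), by omega, ?_⟩
        rw [← hq2]; congr 1; omega
  exact htrans _ _ _ _ hoq (htrans _ _ _ _ hpq (hG A _ _ hO hI).1)

end ConcGame


/-- In a finite concurrent game whose preference relations only
depend on the sets of visited and infinitely-visited states, any Nash equilibrium
outcome can be replaced by a lasso-shaped Nash equilibrium outcome
`π · τ^ω` with `|π|, |τ| ≤ |Stat|²`, equivalent for every player. -/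
theorem stmt0 {Stat Agt Act : Type} [Fintype Stat] [Fintype Agt] [Fintype Act]
    [DecidableEq Agt]
    (G : ConcGame Stat Agt Act)
    (hrefl : ∀ A ρ, G.pref A ρ ρ)
    (htrans : ∀ A ρ₁ ρ₂ ρ₃, G.pref A ρ₁ ρ₂ → G.pref A ρ₂ ρ₃ → G.pref A ρ₁ ρ₃)
    (hG : ∀ A (ρ ρ' : ℕ → Stat), Occ ρ = Occ ρ' → InfOcc ρ = InfOcc ρ' →
      G.pref A ρ ρ' ∧ G.pref A ρ' ρ)
    (s : Stat) (ρ : ℕ → Stat) (σ : Agt → List Stat → Stat → Act)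
    (hNE : G.IsNash s σ) (hout : ∀ n, G.outcome σ s n = ρ n) :
    ∃ (σ' : Agt → List Stat → Stat → Act) (π τ : List Stat),
      G.IsNash s σ' ∧
      π.length ≤ Fintype.card Stat ^ 2 ∧
      τ.length ≤ Fintype.card Stat ^ 2 ∧ τ ≠ [] ∧
      (∀ n, G.outcome σ' s n =
        if n < π.length then π.getD n s else τ.getD ((n - π.length) % τ.length) s) ∧
      ∀ A, G.pref A ρ (G.outcome σ' s) ∧ G.pref A (G.outcome σ' s) ρ := by
  have hout' : G.outcome σ s = ρ := funext hout
  obtain ⟨L, M, f, g, F, hL, hM, hF, h0, hs, hi, hO, hI⟩ := lasso_exists ρ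
  obtain ⟨σ', hN, ho⟩ := ConcGame.transfer G hrefl htrans hG s ρ σ hNE hout' F h0 hs hi hO hI
  refine ⟨σ', (List.range (L+1)).map (fun i => ρ (f i)), (List.range (M+1)).map (fun i => ρ (g i)),
    hN, by simpa using hL, by simpa using hM, by simp, ?_, ?_⟩
  · intro n
    rw [ho]
    simp only [List.length_map, List.length_range]
    rw [hF]
    split_ifs with h
    · rw [List.getD_eq_getElem _ _ (by simpa using h)]
      simp
    · rw [List.getD_eq_getElem _ _ (by simpa using Nat.mod_lt _ (Nat.succ_pos M))]
      simp
  · intro A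
    rw [ho]
    exact hG A _ _ hO hI
end

section
/- Let G be a two-player concurrent game with players A and B such that (i) the preference relation ≼_A is total, Noetherian and almost-well-founded, and (ii) G is determined from every state s: for every play π, (∃σ_A ∀σ_B, π ≼_A Out(s,(σ_A,σ_B))) iff (∀σ_B ∃σ_A, π ≼_A Out(s,(σ_A,σ_B))). Let G' be the game obtained from G by replacing B's preference relation by the trivial one in which all plays are equivalent. Then for every state s and every play π from s, the following are equivalent: (1) there is a Nash equilibrium in G' from s whose outcome ρ satisfies ¬(π ≼_A ρ); (2) player A cannot ensure π from s in G, i.e. there is no strategy σ_A such that π ≼_A Out(s,(σ_A,σ_B)) for every strategy σ_B of B. -/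
/-- The game obtained from `G` by replacing player `pB`'s preference relation
by the trivial one in which all plays are equivalent. -/
def trivialB {Stat Agt Act : Type} [DecidableEq Agt] (G : ConcGame Stat Agt Act)
    (pB : Agt) : ConcGame Stat Agt Act :=
  { G with pref := fun C => if C = pB then fun _ _ => True else G.pref C }

theorem trivialB_run {Stat Agt Act : Type} [DecidableEq Agt] (G : ConcGame Stat Agt Act)
    (pB : Agt) (σ : Agt → List Stat → Stat → Act) (s : Stat) (n : ℕ) :
    (trivialB G pB).run σ s n = G.run σ s n := by
  induction n with
  | zero => rfl
  | succ n ih => simp only [ConcGame.run, ih]; rfl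

theorem trivialB_outcome {Stat Agt Act : Type} [DecidableEq Agt] (G : ConcGame Stat Agt Act)
    (pB : Agt) (σ : Agt → List Stat → Stat → Act) (s : Stat) :
    (trivialB G pB).outcome σ s = G.outcome σ s := by
  funext n
  simp only [ConcGame.outcome, trivialB_run]

/-- For a determined two-player game whose first player has a
total, Noetherian, almost-well-founded preference, there is a Nash equilibrium
of the trivialised game whose outcome is strictly worse than `π` for `A`
iff `A` cannot ensure `π`. -/
theorem stmt1 {Stat Agt Act : Type} [DecidableEq Agt]
    (G : ConcGame Stat Agt Act) (pA pB : Agt) (hAB : pA ≠ pB)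
    (htwo : ∀ C, C = pA ∨ C = pB)
    (hrefl : ∀ C ρ, G.pref C ρ ρ)
    (htrans : ∀ C ρ₁ ρ₂ ρ₃, G.pref C ρ₁ ρ₂ → G.pref C ρ₂ ρ₃ → G.pref C ρ₁ ρ₃)
    (htotal : ∀ ρ ρ', G.pref pA ρ ρ' ∨ G.pref pA ρ' ρ)
    (hnoeth : ∀ S : Set (ℕ → Stat), S.Nonempty →
      ∃ ρ ∈ S, ∀ ρ' ∈ S, ¬ (G.pref pA ρ ρ' ∧ ¬ G.pref pA ρ' ρ))
    (hawf : ∀ S : Set (ℕ → Stat), S.Nonempty → (∃ b, ∀ ρ ∈ S, G.pref pA b ρ) →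
      ∃ ρ ∈ S, ∀ ρ' ∈ S, ¬ (G.pref pA ρ' ρ ∧ ¬ G.pref pA ρ ρ'))
    (hdet : ∀ (t : Stat) (χ : ℕ → Stat),
      (∃ σA, G.IsStrategy pA σA ∧ ∀ σB, G.IsStrategy pB σB →
          G.pref pA χ (G.outcome (fun C => if C = pA then σA else σB) t)) ↔
        (∀ σB, G.IsStrategy pB σB → ∃ σA, G.IsStrategy pA σA ∧
          G.pref pA χ (G.outcome (fun C => if C = pA then σA else σB) t)))
    (s : Stat) (π : ℕ → Stat) (hπ : π 0 = s) :
    (∃ σ, (trivialB G pB).IsNash s σ ∧ ¬ G.pref pA π (G.outcome σ s)) ↔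
      ¬ ∃ σA, G.IsStrategy pA σA ∧ ∀ σB, G.IsStrategy pB σB →
          G.pref pA π (G.outcome (fun C => if C = pA then σA else σB) s) := by
  have hprefA : (trivialB G pB).pref pA = G.pref pA := by
    simp [trivialB, hAB]
  constructor
  · rintro ⟨σ, ⟨hprof, hnash⟩, hnot⟩ ⟨σA, hσA, hens⟩
    have h1 := hnash pA σA hσA
    rw [hprefA, trivialB_outcome, trivialB_outcome] at h1
    have h2 := hens (σ pB) (hprof pB)
    have h3 : (fun C => if C = pA then σA else σ pB) = Function.update σ pA σA := by
      funext C
      rcases htwo C with rfl | rfl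
      · simp
      · simp [hAB.symm]
    rw [h3] at h2
    exact hnot (htrans _ _ _ _ h2 h1)
  · intro h
    rw [hdet s π] at h
    push Not at h
    obtain ⟨σB, hσB, hB⟩ := h
    obtain ⟨ρ, ⟨σA, hσA, rfl⟩, hmax⟩ := hnoeth
      {ρ | ∃ σA, G.IsStrategy pA σA ∧ ρ = G.outcome (fun C => if C = pA then σA else σB) s}
      ⟨_, fun _ t => (G.Allow_nonempty t pA).some,
        fun _ t => (G.Allow_nonempty t pA).some_mem, rfl⟩
    refine ⟨fun C => if C = pA then σA else σB, ⟨?_, ?_⟩, hB σA hσA⟩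
    · intro C
      rcases htwo C with rfl | rfl
      · simp only [if_true]; exact hσA
      · simp only [hAB.symm, if_false]; exact hσB
    · intro C τ hτ
      rcases htwo C with rfl | rfl
      · rw [hprefA, trivialB_outcome, trivialB_outcome]
        have h3 : Function.update (fun D => if D = C then σA else σB) C τ
            = (fun D => if D = C then τ else σB) := by
          funext D
          by_cases hD : D = C
          · subst hD; simp
          · simp [hD]
        rw [h3]
        have h4 := hmax _ ⟨τ, hτ, rfl⟩
        rcases htotal (G.outcome (fun D => if D = C then τ else σB) s)
          (G.outcome (fun D => if D = C then σA else σB) s) with h5 | h5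
        · exact h5
        · by_contra h6
          exact h4 ⟨h5, h6⟩
      · simp [trivialB]
end

section
/- Let G be a concurrent game, s a state, and A_i ≠ A_j two players. Let π and ρ be plays from s with ρ ≼_{A_i} π. Let E(G,A_i,A_j,ρ) be the game extending G with two new states s₀ and s₁, where from s₀ the players A_i and A_j concurrently choose actions in {1,2} (all other players have a single action): equal choices lead to the sink s₁ (which loops on itself) and unequal choices lead to s; the preference of A_j in E(G,A_i,A_j,ρ) satisfies s₀·s₁^ω ≺_{A_j} s₀·π' for every play π' of G from s, and s₀·π' ≼_{A_j} s₀·π'' iff π' ≼_{A_j} π''; for every other player A_k (including A_i), s₀·π' ≼_{A_k} s₀·π'' iff π' ≼_{A_k} π'' and s₀·s₁^ω ∼_{A_k} s₀·ρ. Then: if there is a Nash equilibrium in G from s with outcome π, there is a Nash equilibrium in E(G,A_i,A_j,ρ) from s₀ with outcome s₀·π; and conversely, if there is a Nash equilibrium in E(G,A_i,A_j,ρ) from s₀ with outcome s₀·π, then there is a Nash equilibrium in G from s with outcome π. -/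
/-- States of the extended game: a fresh initial state `start`, a sink `sink`,
and the states of the original game. -/
inductive ExtSt (Stat : Type) where
  | start : ExtSt Stat
  | sink : ExtSt Stat
  | old : Stat → ExtSt Stat

/-- Actions of the extended game: original actions plus the two
matching-penny actions `1, 2` (modelled as `Fin 2`). -/
abbrev ExtAct (Act : Type) := Act ⊕ Fin 2

/-- Turn an extended move into a move of the original game at state `t`
(extended actions are replaced by some allowed action). -/
noncomputable def unlift {Stat Agt Act : Type} (G : ConcGame Stat Agt Act) (t : Stat)
    (m : Agt → ExtAct Act) (A : Agt) : Act :=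
  match m A with
  | Sum.inl a => a
  | Sum.inr _ => (G.Allow_nonempty t A).choose

-- Transition table of the extended game: from `start`, equal choices of the
-- two distinguished players lead to the sink, unequal choices lead to `s`;
-- the sink loops; elsewhere the original game is played.
open Classical in
noncomputable def extTab {Stat Agt Act : Type} (G : ConcGame Stat Agt Act) (s : Stat)
    (pA pB : Agt) : ExtSt Stat → (Agt → ExtAct Act) → ExtSt Stat
  | ExtSt.start, m => if m pA = m pB then ExtSt.sink else ExtSt.old s
  | ExtSt.sink, _ => ExtSt.sink
  | ExtSt.old t, m => ExtSt.old (G.Tab t (unlift G t m))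

/-- The play `s₀ · π'` of the extended game, for `π'` a play of `G`. -/
def extPlay {Stat : Type} (χ : ℕ → Stat) : ℕ → ExtSt Stat
  | 0 => ExtSt.start
  | n + 1 => ExtSt.old (χ n)

/-- The play `s₀ · s₁^ω` of the extended game. -/
def sinkPlay {Stat : Type} : ℕ → ExtSt Stat
  | 0 => ExtSt.start
  | _ + 1 => ExtSt.sink

/-- Allowed actions in the extended game `E(G,Ai,Aj,ρ)`: at `start`, the two
distinguished players choose in `{1,2}` while every other player has a single
action; elsewhere the original allowed actions. -/
def extAllow3 {Stat Agt Act : Type} [DecidableEq Agt] (G : ConcGame Stat Agt Act)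
    (Ai Aj : Agt) : ExtSt Stat → Agt → Set (ExtAct Act)
  | ExtSt.start, C =>
      if C = Ai ∨ C = Aj then Set.range (Sum.inr : Fin 2 → ExtAct Act)
      else {Sum.inr 0}
  | ExtSt.sink, _ => {Sum.inr 0}
  | ExtSt.old t, C => Sum.inl '' G.Allow t C

/-- The extended game `E(G,Ai,Aj,ρ)` (its preference relations are a parameter). -/
noncomputable def extGame3 {Stat Agt Act : Type} [DecidableEq Agt]
    (G : ConcGame Stat Agt Act) (s : Stat) (Ai Aj : Agt)
    (pref' : Agt → (ℕ → ExtSt Stat) → (ℕ → ExtSt Stat) → Prop) :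
    ConcGame (ExtSt Stat) Agt (ExtAct Act) where
  Allow := extAllow3 G Ai Aj
  Allow_nonempty := by
    intro t A
    cases t with
    | start =>
        simp only [extAllow3]
        split
        · exact ⟨Sum.inr 0, Set.mem_range_self 0⟩
        · exact ⟨Sum.inr 0, Set.mem_singleton _⟩
    | sink => exact ⟨Sum.inr 0, Set.mem_singleton _⟩
    | old t => exact (G.Allow_nonempty t A).image Sum.inl
  Tab := extTab G s Ai Aj
  pref := pref'

namespace ExtAux

variable {Stat Agt Act : Type}

noncomputable def proj (G : ConcGame Stat Agt Act) (A : Agt)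
    (τ : List (ExtSt Stat) → ExtSt Stat → ExtAct Act) : List Stat → Stat → Act :=
  fun h t => unlift G t (fun _ => τ (ExtSt.start :: h.map ExtSt.old) (ExtSt.old t)) A

def strip : List (ExtSt Stat) → List Stat
  | [] => []
  | ExtSt.old t :: l => t :: strip l
  | ExtSt.start :: l => strip l
  | ExtSt.sink :: l => strip l

theorem strip_map (h : List Stat) : strip (h.map ExtSt.old) = h := by
  induction h with
  | nil => rfl
  | cons a l ih => simp [strip, ih]

def lift (f : ExtAct Act) (τ : List Stat → Stat → Act) :
    List (ExtSt Stat) → ExtSt Stat → ExtAct Act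
  | _, ExtSt.start => f
  | _, ExtSt.sink => Sum.inr 0
  | h, ExtSt.old t => Sum.inl (τ (strip h) t)

theorem proj_lift (G : ConcGame Stat Agt Act) (A : Agt) (f : ExtAct Act)
    (τ : List Stat → Stat → Act) : proj G A (lift f τ) = τ := by
  funext h t
  simp [proj, lift, unlift, strip, strip_map]

theorem proj_update [DecidableEq Agt] (G : ConcGame Stat Agt Act)
    (σ : Agt → List (ExtSt Stat) → ExtSt Stat → ExtAct Act) (A : Agt)
    (τ : List (ExtSt Stat) → ExtSt Stat → ExtAct Act) :
    (fun C => proj G C (Function.update σ A τ C)) =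
      Function.update (fun C => proj G C (σ C)) A (proj G A τ) := by
  funext C
  by_cases h : C = A
  · subst h; simp
  · simp [h]

variable [DecidableEq Agt] (G : ConcGame Stat Agt Act) (s : Stat) (Ai Aj : Agt)
  (pref' : Agt → (ℕ → ExtSt Stat) → (ℕ → ExtSt Stat) → Prop)

theorem proj_strat (A : Agt) (τ : List (ExtSt Stat) → ExtSt Stat → ExtAct Act)
    (h : (extGame3 G s Ai Aj pref').IsStrategy A τ) : G.IsStrategy A (proj G A τ) := by
  intro l t
  have h1 := h (ExtSt.start :: l.map ExtSt.old) (ExtSt.old t)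
  obtain ⟨a, ha, he⟩ := h1
  simp only [proj, unlift, ← he]
  exact ha

theorem lift_strat (A : Agt) (f : ExtAct Act) (τ : List Stat → Stat → Act)
    (hf : f ∈ extAllow3 G Ai Aj ExtSt.start A)
    (h : G.IsStrategy A τ) : (extGame3 G s Ai Aj pref').IsStrategy A (lift f τ) := by
  intro l t
  cases t with
  | start => exact hf
  | sink => exact Set.mem_singleton _
  | old t => exact ⟨_, h _ _, rfl⟩

theorem run_ne (σ : Agt → List (ExtSt Stat) → ExtSt Stat → ExtAct Act)
    (h : σ Ai [] ExtSt.start ≠ σ Aj [] ExtSt.start) (n : ℕ) :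
    (extGame3 G s Ai Aj pref').run σ ExtSt.start (n + 1) =
      (ExtSt.old (G.run (fun C => proj G C (σ C)) s n).1,
        ExtSt.start :: (G.run (fun C => proj G C (σ C)) s n).2.map ExtSt.old) := by
  induction n with
  | zero => simp [ConcGame.run, extGame3, extTab, h]
  | succ n ih =>
    rw [ConcGame.run, ih]
    simp only [ConcGame.run, extGame3, extTab, List.map_append, List.cons_append,
      List.map_cons, List.map_nil]
    rfl

theorem outcome_ne (σ : Agt → List (ExtSt Stat) → ExtSt Stat → ExtAct Act)
    (h : σ Ai [] ExtSt.start ≠ σ Aj [] ExtSt.start) :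
    (extGame3 G s Ai Aj pref').outcome σ ExtSt.start =
      extPlay (G.outcome (fun C => proj G C (σ C)) s) := by
  funext n
  cases n with
  | zero => rfl
  | succ n => simp only [ConcGame.outcome, run_ne G s Ai Aj pref' σ h]; rfl

theorem outcome_eq (σ : Agt → List (ExtSt Stat) → ExtSt Stat → ExtAct Act)
    (h : σ Ai [] ExtSt.start = σ Aj [] ExtSt.start) :
    (extGame3 G s Ai Aj pref').outcome σ ExtSt.start = sinkPlay := by
  funext n
  cases n with
  | zero => rfl
  | succ n =>
    induction n with
    | zero => simp [ConcGame.outcome, ConcGame.run, extGame3, extTab, h, sinkPlay]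
    | succ n ih =>
      simp only [ConcGame.outcome, sinkPlay] at ih ⊢
      rw [ConcGame.run]
      simp only [ih]
      rfl

end ExtAux

/-- Nash equilibria of `G` from `s` with outcome `π`
correspond to Nash equilibria of `E(G,Ai,Aj,ρ)` from `s₀` with outcome
`s₀ · π`, whenever `ρ ≼_{Ai} π`. -/
theorem stmt3 {Stat Agt Act : Type} [DecidableEq Agt]
    (G : ConcGame Stat Agt Act) (Ai Aj : Agt) (hij : Ai ≠ Aj)
    (hrefl : ∀ C χ, G.pref C χ χ)
    (htrans : ∀ C χ₁ χ₂ χ₃, G.pref C χ₁ χ₂ → G.pref C χ₂ χ₃ → G.pref C χ₁ χ₃)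
    (s : Stat) (π ρ : ℕ → Stat) (hπ : π 0 = s) (hρ : ρ 0 = s)
    (hρπ : G.pref Ai ρ π)
    -- the preference relations of the extended game E(G,Ai,Aj,ρ):
    (pref' : Agt → (ℕ → ExtSt Stat) → (ℕ → ExtSt Stat) → Prop)
    (hrefl' : ∀ C χ, pref' C χ χ)
    (htrans' : ∀ C χ₁ χ₂ χ₃, pref' C χ₁ χ₂ → pref' C χ₂ χ₃ → pref' C χ₁ χ₃)
    (hj1 : ∀ χ : ℕ → Stat, χ 0 = s →
      pref' Aj sinkPlay (extPlay χ) ∧ ¬ pref' Aj (extPlay χ) sinkPlay)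
    (hj2 : ∀ χ χ' : ℕ → Stat, χ 0 = s → χ' 0 = s →
      (pref' Aj (extPlay χ) (extPlay χ') ↔ G.pref Aj χ χ'))
    (hk1 : ∀ C, C ≠ Aj → ∀ χ χ' : ℕ → Stat, χ 0 = s → χ' 0 = s →
      (pref' C (extPlay χ) (extPlay χ') ↔ G.pref C χ χ'))
    (hk2 : ∀ C, C ≠ Aj →
      pref' C sinkPlay (extPlay ρ) ∧ pref' C (extPlay ρ) sinkPlay) :
    ((∃ σ, G.IsNash s σ ∧ ∀ n, G.outcome σ s n = π n) →
      ∃ σ', (extGame3 G s Ai Aj pref').IsNash ExtSt.start σ' ∧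
        ∀ n, (extGame3 G s Ai Aj pref').outcome σ' ExtSt.start n = extPlay π n) ∧
    ((∃ σ', (extGame3 G s Ai Aj pref').IsNash ExtSt.start σ' ∧
        ∀ n, (extGame3 G s Ai Aj pref').outcome σ' ExtSt.start n = extPlay π n) →
      ∃ σ, G.IsNash s σ ∧ ∀ n, G.outcome σ s n = π n) := by
  have hpref : ∀ C, ∀ χ χ' : ℕ → Stat, χ 0 = s → χ' 0 = s →
      (pref' C (extPlay χ) (extPlay χ') ↔ G.pref C χ χ') := by
    intro C
    by_cases hC : C = Aj
    · subst hC; exact hj2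
    · exact hk1 C hC
  constructor
  · rintro ⟨σ, ⟨hσ, hN⟩, hout⟩
    have hout' : G.outcome σ s = π := funext hout
    let f : Agt → ExtAct Act := fun A => if A = Aj then Sum.inr 1 else Sum.inr 0
    let σ' : Agt → List (ExtSt Stat) → ExtSt Stat → ExtAct Act :=
      fun A => ExtAux.lift (f A) (σ A)
    have hne : σ' Ai [] ExtSt.start ≠ σ' Aj [] ExtSt.start := by
      simp [σ', ExtAux.lift, f, hij]
    have hp : (fun C => ExtAux.proj G C (σ' C)) = σ :=
      funext fun C => ExtAux.proj_lift G C _ _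
    have ho : (extGame3 G s Ai Aj pref').outcome σ' ExtSt.start = extPlay π := by
      rw [ExtAux.outcome_ne G s Ai Aj pref' σ' hne, hp, hout']
    refine ⟨σ', ⟨?_, ?_⟩, fun n => congrFun ho n⟩
    · intro A
      apply ExtAux.lift_strat G s Ai Aj pref' A _ _ _ (hσ A)
      by_cases h1 : A = Aj
      · simp [extAllow3, f, h1]
      · by_cases h2 : A = Ai <;> simp [extAllow3, f, h1, h2, hij]
    · intro A τ hτ
      rw [ho]
      change pref' A _ _
      by_cases he : Function.update σ' A τ Ai [] ExtSt.start =
          Function.update σ' A τ Aj [] ExtSt.start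
      · rw [ExtAux.outcome_eq G s Ai Aj pref' _ he]
        by_cases h1 : A = Aj
        · subst h1; exact (hj1 π hπ).1
        · by_cases h2 : A = Ai
          · subst h2
            exact htrans' _ _ _ _ (hk2 A h1).1 ((hpref A ρ π hρ hπ).2 hρπ)
          · rw [Function.update_of_ne (Ne.symm h2), Function.update_of_ne (Ne.symm h1)] at he
            exact absurd he hne
      · rw [ExtAux.outcome_ne G s Ai Aj pref' _ he, ExtAux.proj_update, hp]
        refine (hpref A _ π rfl hπ).2 ?_
        have := hN A _ (ExtAux.proj_strat G s Ai Aj pref' A τ hτ)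
        rwa [hout'] at this
  · rintro ⟨σ', ⟨hσ, hN⟩, hout⟩
    have hout' := funext hout
    have hne : σ' Ai [] ExtSt.start ≠ σ' Aj [] ExtSt.start := by
      intro he
      rw [ExtAux.outcome_eq G s Ai Aj pref' _ he] at hout'
      have := congrFun hout' 1
      simp [sinkPlay, extPlay] at this
    have ho : G.outcome (fun C => ExtAux.proj G C (σ' C)) s = π := by
      rw [ExtAux.outcome_ne G s Ai Aj pref' _ hne] at hout'
      funext n
      have := congrFun hout' (n + 1)
      simpa [extPlay] using this
    refine ⟨fun C => ExtAux.proj G C (σ' C), ⟨?_, ?_⟩, fun n => congrFun ho n⟩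
    · intro A
      exact ExtAux.proj_strat G s Ai Aj pref' A _ (hσ A)
    · intro A τ hτ
      rw [ho]
      have h1 := hN A (ExtAux.lift (σ' A [] ExtSt.start) τ)
        (ExtAux.lift_strat G s Ai Aj pref' A _ _ (hσ A [] ExtSt.start) hτ)
      have hs : ∀ C, Function.update σ' A (ExtAux.lift (σ' A [] ExtSt.start) τ) C []
          ExtSt.start = σ' C [] ExtSt.start := by
        intro C
        by_cases h : C = A
        · subst h; simp [ExtAux.lift]
        · simp [h]
      rw [hout', ExtAux.outcome_ne G s Ai Aj pref' _ (by rw [hs, hs]; exact hne),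
        ExtAux.proj_update, ExtAux.proj_lift] at h1
      exact (hpref A _ π rfl hπ).1 h1
end

section
/- Let G be a concurrent game, s a state of G, and π a play from s. The following are equivalent: (1) Eve has a winning strategy in the suspect game H(G,π) from (s,Agt) whose outcome ρ' from (s,Agt) when Adam always obeys Eve satisfies proj₁(ρ') = ρ; (2) there is a trigger profile for π in G from s whose outcome from s is ρ. -/
/-- The set of suspect players for the transition `(s, s')` and the move `m`:
players that could unilaterally deviate from `m` and produce `s'`. -/
def Susp {Stat Agt Act : Type} [DecidableEq Agt] (G : ConcGame Stat Agt Act)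
    (s s' : Stat) (m : Agt → Act) : Set Agt :=
  {A | ∃ a ∈ G.Allow s A, G.Tab s (Function.update m A a) = s'}

/-- A strategy for Eve in the suspect game maps a history of Eve-states and the
current Eve-state to a move; it must propose legal moves. -/
def EveLegal {Stat Agt Act : Type} (G : ConcGame Stat Agt Act)
    (σE : List (Stat × Set Agt) → Stat × Set Agt → (Agt → Act)) : Prop :=
  ∀ h q, G.Legal q.1 (σE h q)

/-- Plays of the suspect game (sequences of Eve-states) consistent with Eve's
strategy `σE` from the Eve-state `q₀`: Adam freely chooses the next state (the
first component), and the suspect sets are updated accordingly. -/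
def SGConsistent {Stat Agt Act : Type} [DecidableEq Agt] (G : ConcGame Stat Agt Act)
    (σE : List (Stat × Set Agt) → Stat × Set Agt → (Agt → Act))
    (q₀ : Stat × Set Agt) (q : ℕ → Stat × Set Agt) : Prop :=
  q 0 = q₀ ∧
    ∀ n, (q (n + 1)).2 =
      (q n).2 ∩ Susp G (q n).1 (q (n + 1)).1 (σE ((List.range n).map q) (q n))

/-- A play of the suspect game `H(G,π)` is winning for Eve iff its first
projection is at most `π` for every player in the limit of the suspect sets. -/
def WinningPlay {Stat Agt Act : Type} (G : ConcGame Stat Agt Act) (π : ℕ → Stat)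
    (q : ℕ → Stat × Set Agt) : Prop :=
  ∀ A ∈ ⋂ n, (q n).2, G.pref A (fun n => (q n).1) π

/-- Eve's strategy is winning from `q₀` in `H(G,π)` if all consistent plays are
winning for Eve. -/
def WinningFrom {Stat Agt Act : Type} [DecidableEq Agt] (G : ConcGame Stat Agt Act)
    (π : ℕ → Stat)
    (σE : List (Stat × Set Agt) → Stat × Set Agt → (Agt → Act))
    (q₀ : Stat × Set Agt) : Prop :=
  ∀ q, SGConsistent G σE q₀ q → WinningPlay G π q

/-- The run of the suspect game from `q₀` when Adam always obeys Eve. -/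
def obeyRun {Stat Agt Act : Type} [DecidableEq Agt] (G : ConcGame Stat Agt Act)
    (σE : List (Stat × Set Agt) → Stat × Set Agt → (Agt → Act))
    (q₀ : Stat × Set Agt) : ℕ → (Stat × Set Agt) × List (Stat × Set Agt)
  | 0 => (q₀, [])
  | n + 1 =>
    let p := obeyRun G σE q₀ n
    let m := σE p.2 p.1
    let t := G.Tab p.1.1 m
    ((t, p.1.2 ∩ Susp G p.1.1 t m), p.2 ++ [p.1])

/-- The outcome of Eve's strategy from `q₀` when Adam always obeys Eve. -/
def obeyOutcome {Stat Agt Act : Type} [DecidableEq Agt] (G : ConcGame Stat Agt Act)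
    (σE : List (Stat × Set Agt) → Stat × Set Agt → (Agt → Act))
    (q₀ : Stat × Set Agt) (n : ℕ) : Stat × Set Agt :=
  (obeyRun G σE q₀ n).1

/-- A trigger profile for the play `π` from `s`: any unilateral deviation yields
an outcome that is at most `π` for the deviator. -/
def IsTrigger {Stat Agt Act : Type} [DecidableEq Agt] (G : ConcGame Stat Agt Act)
    (s : Stat) (π : ℕ → Stat) (σ : Agt → List Stat → Stat → Act) : Prop :=
  G.IsProfile σ ∧
    ∀ A τ, G.IsStrategy A τ → G.pref A (G.outcome (Function.update σ A τ) s) π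

theorem run_snd {Stat Agt Act : Type} (G : ConcGame Stat Agt Act)
    (σ : Agt → List Stat → Stat → Act) (s : Stat) (n : ℕ) :
    (G.run σ s n).2 = (List.range n).map (G.outcome σ s) := by
  induction n with
  | zero => rfl
  | succ n ih =>
    rw [List.range_succ, List.map_append, ← ih]
    rfl

theorem outcome_succ {Stat Agt Act : Type} (G : ConcGame Stat Agt Act)
    (σ : Agt → List Stat → Stat → Act) (s : Stat) (n : ℕ) :
    G.outcome σ s (n + 1) = G.Tab (G.outcome σ s n)
      (fun A => σ A ((List.range n).map (G.outcome σ s)) (G.outcome σ s n)) := by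
  rw [← run_snd]
  rfl

/-- The suspect set after the Eve-history `acc` when the next state is `t`. -/
def nextP {Stat Agt Act : Type} [DecidableEq Agt] (G : ConcGame Stat Agt Act)
    (σE : List (Stat × Set Agt) → Stat × Set Agt → (Agt → Act))
    (acc : List (Stat × Set Agt)) (t : Stat) : Set Agt :=
  match acc.getLast? with
  | none => Set.univ
  | some p => p.2 ∩ Susp G p.1 t (σE acc.dropLast p)

/-- Lift a history to a history of Eve-states. -/
def liftH {Stat Agt Act : Type} [DecidableEq Agt] (G : ConcGame Stat Agt Act)
    (σE : List (Stat × Set Agt) → Stat × Set Agt → (Agt → Act)) (h : List Stat) :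
    List (Stat × Set Agt) :=
  h.foldl (fun acc t => acc ++ [(t, nextP G σE acc t)]) []

/-- Lift a play to a play of the suspect game. -/
def liftQ {Stat Agt Act : Type} [DecidableEq Agt] (G : ConcGame Stat Agt Act)
    (σE : List (Stat × Set Agt) → Stat × Set Agt → (Agt → Act)) (p : ℕ → Stat) (n : ℕ) :
    Stat × Set Agt :=
  (p n, nextP G σE (liftH G σE ((List.range n).map p)) (p n))

theorem liftH_map {Stat Agt Act : Type} [DecidableEq Agt] (G : ConcGame Stat Agt Act)
    (σE : List (Stat × Set Agt) → Stat × Set Agt → (Agt → Act)) (p : ℕ → Stat) (n : ℕ) :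
    liftH G σE ((List.range n).map p) = (List.range n).map (liftQ G σE p) := by
  induction n with
  | zero => rfl
  | succ n ih =>
    rw [List.range_succ, List.map_append, List.map_append, ← ih]
    simp [liftH, liftQ]

theorem liftQ_succ {Stat Agt Act : Type} [DecidableEq Agt] (G : ConcGame Stat Agt Act)
    (σE : List (Stat × Set Agt) → Stat × Set Agt → (Agt → Act)) (p : ℕ → Stat) (n : ℕ) :
    (liftQ G σE p (n + 1)).2 = (liftQ G σE p n).2 ∩
      Susp G (p n) (p (n + 1)) (σE ((List.range n).map (liftQ G σE p)) (liftQ G σE p n)) := by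
  have h : (liftQ G σE p (n + 1)).2
      = nextP G σE ((List.range (n + 1)).map (liftQ G σE p)) (p (n + 1)) := by
    rw [← liftH_map]; rfl
  rw [h, List.range_succ, List.map_append]
  simp only [nextP, List.map_cons, List.map_nil, List.getLast?_concat, List.dropLast_concat]
  rfl

/-- The profile induced by a strategy of Eve. -/
def profOf {Stat Agt Act : Type} [DecidableEq Agt] (G : ConcGame Stat Agt Act)
    (σE : List (Stat × Set Agt) → Stat × Set Agt → (Agt → Act)) :
    Agt → List Stat → Stat → Act :=
  fun A h t => σE (liftH G σE h) (t, nextP G σE (liftH G σE h) t) A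

theorem profOf_map {Stat Agt Act : Type} [DecidableEq Agt] (G : ConcGame Stat Agt Act)
    (σE : List (Stat × Set Agt) → Stat × Set Agt → (Agt → Act)) (p : ℕ → Stat) (n : ℕ)
    (A : Agt) : profOf G σE A ((List.range n).map p) (p n)
      = σE ((List.range n).map (liftQ G σE p)) (liftQ G σE p n) A := by
  rw [← liftH_map]; rfl

theorem obeyRun_snd {Stat Agt Act : Type} [DecidableEq Agt] (G : ConcGame Stat Agt Act)
    (σE : List (Stat × Set Agt) → Stat × Set Agt → (Agt → Act)) (q₀ : Stat × Set Agt) (n : ℕ) :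
    (obeyRun G σE q₀ n).2 = (List.range n).map (obeyOutcome G σE q₀) := by
  induction n with
  | zero => rfl
  | succ n ih =>
    rw [List.range_succ, List.map_append, ← ih]
    rfl

theorem update_app {Stat Agt Act : Type} [DecidableEq Agt]
    (σ : Agt → List Stat → Stat → Act) (A : Agt) (τ : List Stat → Stat → Act)
    (h : List Stat) (t : Stat) :
    (fun B => Function.update σ A τ B h t)
      = Function.update (fun B => σ B h t) A (τ h t) := by
  funext B
  by_cases hB : B = A
  · subst hB; simp
  · simp [Function.update_of_ne hB]

/-- Eve has a winning strategy in the suspect game `H(G,π)`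
from `(s, Agt)` whose obedient outcome projects to `ρ` iff there is a trigger
profile for `π` in `G` from `s` with outcome `ρ`. -/
theorem stmt4 {Stat Agt Act : Type} [DecidableEq Agt] (G : ConcGame Stat Agt Act)
    (hrefl : ∀ A χ, G.pref A χ χ)
    (htrans : ∀ A χ₁ χ₂ χ₃, G.pref A χ₁ χ₂ → G.pref A χ₂ χ₃ → G.pref A χ₁ χ₃)
    (s : Stat) (π : ℕ → Stat) (hπ : π 0 = s) (ρ : ℕ → Stat) :
    (∃ σE, EveLegal G σE ∧ WinningFrom G π σE (s, Set.univ) ∧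
        ∀ n, (obeyOutcome G σE (s, Set.univ) n).1 = ρ n) ↔
      ∃ σ, IsTrigger G s π σ ∧ ∀ n, G.outcome σ s n = ρ n := by
  classical
  constructor
  · rintro ⟨σE, hL, hW, hO⟩
    refine ⟨profOf G σE, ⟨fun A h t => hL _ (t, _) A, ?_⟩, ?_⟩
    · intro A τ hτ
      set p := G.outcome (Function.update (profOf G σE) A τ) s with hp
      refine hW (liftQ G σE p) ⟨rfl, fun n => liftQ_succ G σE p n⟩ A ?_
      rw [Set.mem_iInter]
      intro n
      induction n with
      | zero => exact Set.mem_univ _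
      | succ n ih =>
        rw [liftQ_succ]
        refine ⟨ih, τ ((List.range n).map p) (p n), hτ _ _, ?_⟩
        have h := outcome_succ G (Function.update (profOf G σE) A τ) s n
        rw [← hp, update_app] at h
        rw [h]
        simp only [profOf_map]
    · intro n
      rw [← hO n]
      set p := G.outcome (profOf G σE) s with hp
      have key : ∀ n, obeyRun G σE (s, Set.univ) n
          = (liftQ G σE p n, (List.range n).map (liftQ G σE p)) := by
        intro n
        induction n with
        | zero => rfl
        | succ n ih =>
          have h := outcome_succ G (profOf G σE) s n
          rw [← hp] at h
          simp only [profOf_map] at h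
          simp only [obeyRun, ih]
          refine Prod.ext (Prod.ext ?_ ?_) ?_
          · exact h.symm
          · rw [liftQ_succ, h]; rfl
          · simp [List.range_succ]
      rw [obeyOutcome, key]
      rfl
  · rintro ⟨σ, ⟨hP, hT⟩, hO⟩
    refine ⟨fun h q A => σ A (h.map Prod.fst) q.1, fun h q A => hP A _ _, ?_, ?_⟩
    · rintro q ⟨h0, hq⟩ A hA
      rw [Set.mem_iInter] at hA
      have hex : ∀ n, ∃ a ∈ G.Allow (q n).1 A, G.Tab (q n).1 (Function.update
          (fun B => σ B (((List.range n).map q).map Prod.fst) (q n).1) A a) = (q (n + 1)).1 := by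
        intro n
        have h := hA (n + 1)
        rw [hq n] at h
        exact h.2
      choose a ha hTab using hex
      let τ : List Stat → Stat → Act := fun h t =>
        if t = (q h.length).1 then a h.length else (G.Allow_nonempty t A).choose
      have hτ : G.IsStrategy A τ := by
        intro h t
        by_cases ht : t = (q h.length).1
        · simp only [τ, if_pos ht]; rw [ht]; exact ha _
        · simp only [τ, if_neg ht]; exact (G.Allow_nonempty t A).choose_spec
      have key : ∀ n, G.run (Function.update σ A τ) s n
          = ((q n).1, (List.range n).map (fun k => (q k).1)) := by
        intro n
        induction n with
        | zero => simp [ConcGame.run, h0]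
        | succ n ih =>
          simp only [ConcGame.run, ih]
          refine Prod.ext ?_ ?_
          · have h := hTab n
            rw [List.map_map] at h
            rw [← h, update_app]
            simp [τ, Function.comp_def]
          · simp [List.range_succ]
      have h := hT A τ hτ
      have e : G.outcome (Function.update σ A τ) s = fun n => (q n).1 := by
        funext n
        rw [ConcGame.outcome, key]
      rwa [e] at h
    · intro n
      rw [← hO n]
      have key : ∀ n, (obeyRun G (fun h q A => σ A (h.map Prod.fst) q.1) (s, Set.univ) n).1.1
            = (G.run σ s n).1 ∧
          (obeyRun G (fun h q A => σ A (h.map Prod.fst) q.1) (s, Set.univ) n).2.map Prod.fst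
            = (G.run σ s n).2 := by
        intro n
        induction n with
        | zero => exact ⟨rfl, rfl⟩
        | succ n ih =>
          obtain ⟨h1, h2⟩ := ih
          simp only [obeyRun, ConcGame.run, List.map_append, List.map_cons, List.map_nil, h1, h2]
          exact ⟨trivial, trivial⟩
      exact (key n).1
end

section
/- Let G be a finite concurrent game and π a play in G, and let N = Σ_{s∈Stat} Π_{A∈Agt} |Allow(s,A)| be the number of entries of the transition table of G. Then the number of states of the suspect game H(G,π) reachable from the set Stat × {Agt} is at most (|Stat| + N)·(1 + (|Stat| + N)·N). -/
/-- States of the suspect game: Eve's states `Stat × 2^Agt` and Adam's states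
`Stat × 2^Agt × Act^Agt`. -/
abbrev SGState (Stat Agt Act : Type) :=
  (Stat × Set Agt) ⊕ (Stat × Set Agt × (Agt → Act))

/-- The transition relation of the suspect game: from an Eve state, Eve picks a
legal move; from an Adam state, Adam picks any state and the suspect set is
updated. -/
def SGStep {Stat Agt Act : Type} [DecidableEq Agt] (G : ConcGame Stat Agt Act) :
    SGState Stat Agt Act → SGState Stat Agt Act → Prop
  | Sum.inl q, Sum.inr a => a.1 = q.1 ∧ a.2.1 = q.2 ∧ G.Legal q.1 a.2.2
  | Sum.inr a, Sum.inl q => q.2 = a.2.1 ∩ Susp G a.1 q.1 a.2.2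
  | _, _ => False

/-- Suspect sets that can occur: everybody, or only players with two choices at some state. -/
def GoodSet {Stat Agt Act : Type} (G : ConcGame Stat Agt Act) (P : Set Agt) : Prop :=
  P = Set.univ ∨ ∃ s, ∀ A ∈ P, (G.Allow s A).Nontrivial

/-- Invariant of reachable states. -/
def GoodState {Stat Agt Act : Type} (G : ConcGame Stat Agt Act) : SGState Stat Agt Act → Prop
  | Sum.inl q => GoodSet G q.2
  | Sum.inr a => GoodSet G a.2.1 ∧ G.Legal a.1 a.2.2

theorem goodState_step {Stat Agt Act : Type} [DecidableEq Agt] (G : ConcGame Stat Agt Act)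
    (x y : SGState Stat Agt Act) (hx : GoodState G x) (h : SGStep G x y) : GoodState G y := by
  rcases x with ⟨s, P⟩ | ⟨s, P, m⟩ <;> rcases y with ⟨t, Q⟩ | ⟨t, Q, m'⟩
  · exact h.elim
  · obtain ⟨h1, h2, h3⟩ := h
    simp only at h1 h2 h3
    subst h1 h2
    exact ⟨hx, h3⟩
  · obtain ⟨hP, hm⟩ := hx
    simp only at hP hm
    have h' : Q = P ∩ Susp G s t m := h
    subst h'
    change GoodSet G (P ∩ Susp G s t m)
    by_cases ht : G.Tab s m = t
    · have : Susp G s t m = Set.univ := by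
        ext A
        simp only [Susp, Set.mem_ofPred_eq, Set.mem_univ, iff_true]
        exact ⟨m A, hm A, by simpa using ht⟩
      rw [this, Set.inter_univ]
      exact hP
    · right
      refine ⟨s, ?_⟩
      rintro A ⟨-, a, ha, hta⟩
      refine ⟨a, ha, m A, hm A, ?_⟩
      rintro rfl
      apply ht
      simpa using hta
  · exact h.elim

/-- Entries of the transition table. -/
abbrev Entry {Stat Agt Act : Type} (G : ConcGame Stat Agt Act) : Type :=
  Σ s : Stat, ∀ A : Agt, G.Allow s A

/-- Coding of suspect sets by table entries. -/
noncomputable def codeSet {Stat Agt Act : Type} (G : ConcGame Stat Agt Act) :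
    Option (Entry G) → Set Agt
  | none => Set.univ
  | some e => {A | (e.2 A : Act) ≠ (G.Allow_nonempty e.1 A).some}

theorem codeSet_surj {Stat Agt Act : Type} (G : ConcGame Stat Agt Act) (P : Set Agt)
    (h : GoodSet G P) : ∃ o, codeSet G o = P := by
  classical
  rcases h with rfl | ⟨s, hs⟩
  · exact ⟨none, rfl⟩
  · have : ∀ A, ∃ a : G.Allow s A, (a : Act) ≠ (G.Allow_nonempty s A).some ↔ A ∈ P := by
      intro A
      by_cases hA : A ∈ P
      · obtain ⟨b, hb, hne⟩ := (hs A hA).exists_ne (G.Allow_nonempty s A).some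
        exact ⟨⟨b, hb⟩, by simp [hA, hne]⟩
      · exact ⟨⟨_, (G.Allow_nonempty s A).some_mem⟩, by simp [hA]⟩
    choose m hm using this
    exact ⟨some ⟨s, m⟩, Set.ext hm⟩

/-- Coding of reachable states. -/
noncomputable def codeState {Stat Agt Act : Type} (G : ConcGame Stat Agt Act) :
    (Stat ⊕ Entry G) × Option (Entry G) → SGState Stat Agt Act
  | (Sum.inl s, o) => Sum.inl (s, codeSet G o)
  | (Sum.inr e, o) => Sum.inr (e.1, codeSet G o, fun A => e.2 A)

theorem codeState_surj {Stat Agt Act : Type} (G : ConcGame Stat Agt Act)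
    (x : SGState Stat Agt Act) (h : GoodState G x) : x ∈ Set.range (codeState G) := by
  rcases x with ⟨s, P⟩ | ⟨s, P, m⟩
  · obtain ⟨o, rfl⟩ := codeSet_surj G P h
    exact ⟨(Sum.inl s, o), rfl⟩
  · obtain ⟨hP, hm⟩ := h
    obtain ⟨o, ho⟩ := codeSet_surj G P hP
    subst ho
    exact ⟨(Sum.inr ⟨s, fun A => ⟨m A, hm A⟩⟩, o), rfl⟩

/-- The number of states of the suspect game reachable from
`Stat × {Agt}` is at most `(|Stat| + N)·(1 + (|Stat| + N)·N)`, where `N` is the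
size of the transition table. -/
theorem stmt6 {Stat Agt Act : Type} [Fintype Stat] [Fintype Agt] [Fintype Act]
    [DecidableEq Agt] (G : ConcGame Stat Agt Act) :
    {x : SGState Stat Agt Act |
        ∃ s : Stat, Relation.ReflTransGen (SGStep G) (Sum.inl (s, Set.univ)) x}.ncard ≤
      (Fintype.card Stat + ∑ s : Stat, ∏ A : Agt, (G.Allow s A).ncard) *
        (1 + (Fintype.card Stat + ∑ s : Stat, ∏ A : Agt, (G.Allow s A).ncard) *
          (∑ s : Stat, ∏ A : Agt, (G.Allow s A).ncard)) := by
  classical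
  have hsub : {x : SGState Stat Agt Act |
      ∃ s : Stat, Relation.ReflTransGen (SGStep G) (Sum.inl (s, Set.univ)) x} ⊆
      Set.range (codeState G) := by
    rintro x ⟨s, hx⟩
    apply codeState_surj
    induction hx with
    | refl => exact Or.inl rfl
    | tail _ h ih => exact goodState_step G _ _ ih h
  have hN : Nat.card (Entry G) = ∑ s : Stat, ∏ A : Agt, (G.Allow s A).ncard := by
    simp only [Entry, Nat.card_sigma, Nat.card_pi, Nat.card_coe_set_eq]
  have h1 := Set.ncard_le_ncard hsub (Set.finite_range _)
  have h2 : (Set.range (codeState G)).ncard ≤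
      Nat.card ((Stat ⊕ Entry G) × Option (Entry G)) := by
    rw [← Nat.card_coe_set_eq]
    exact Finite.card_range_le _
  rw [Nat.card_prod, Nat.card_sum, Finite.card_option, hN, Nat.card_eq_fintype_card] at h2
  refine (h1.trans h2).trans ?_
  generalize (∑ s : Stat, ∏ A : Agt, (G.Allow s A).ncard) = N
  rcases Nat.eq_zero_or_pos (Fintype.card Stat + N) with h0 | h0
  · simp [h0]
  · apply Nat.mul_le_mul_left
    nlinarith [Nat.mul_le_mul_right N h0]
end

section
/- Let G be a finite concurrent game in which each player A has a single reachability objective given by a target set T_A ⊆ Stat (a play ρ is winning for A iff Occ(ρ) ∩ T_A ≠ ∅). Let L ⊆ Agt and define T_L = {(s,P) ∈ Stat × 2^Agt | ∃A ∈ P ∩ L, s ∈ T_A}. Then for every state q of the suspect-game arena: Eve has a winning strategy from q in the suspect game H(G,L) if and only if Eve has a strategy from q in the same arena all of whose consistent plays ρ satisfy Occ(ρ) ∩ T_L = ∅ (the safety objective avoiding T_L). -/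
theorem exists_rec_seq {α : Type} (f : List α → α → α) (a : α) :
    ∃ q : ℕ → α, q 0 = a ∧ ∀ n, q (n + 1) = f ((List.range n).map q) (q n) := by
  let r : ℕ → α × List α := fun n =>
    Nat.rec (a, []) (fun _ p => (f p.2 p.1, p.2 ++ [p.1])) n
  have hr : ∀ n, r (n + 1) = (f (r n).2 (r n).1, (r n).2 ++ [(r n).1]) := fun n => rfl
  have h2 : ∀ n, (r n).2 = (List.range n).map (fun k => (r k).1) := by
    intro n
    induction n with
    | zero => rfl
    | succ k ih => rw [hr, List.range_succ, List.map_append, ← ih]; rfl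
  refine ⟨fun n => (r n).1, rfl, fun n => ?_⟩
  rw [← h2]

/-- In a finite game where each player `A` has the single
reachability objective with target `T A`, and for `L ⊆ Agt`, Eve wins the
suspect game `H(G,L)` from an Eve-state `q₀` (every player of the limit suspect
set that belongs to `L` must lose her reachability objective) iff she can win
the safety game avoiding `T_L = {(s,P) | ∃ A ∈ P ∩ L, s ∈ T A}` from `q₀`. -/
theorem stmt7 {Stat Agt Act : Type} [Fintype Stat] [Fintype Agt] [Fintype Act]
    [DecidableEq Agt] (G : ConcGame Stat Agt Act)
    (T : Agt → Set Stat) (L : Set Agt) (q₀ : Stat × Set Agt) :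
    (∃ σE, EveLegal G σE ∧ ∀ q, SGConsistent G σE q₀ q →
        ∀ A ∈ (⋂ n, (q n).2) ∩ L, Occ (fun n => (q n).1) ∩ T A = ∅) ↔
      ∃ σE, EveLegal G σE ∧ ∀ q, SGConsistent G σE q₀ q →
        Occ q ∩ {p : Stat × Set Agt | ∃ A ∈ p.2 ∩ L, p.1 ∈ T A} = ∅ := by
  refine exists_congr fun σE => and_congr_right fun hleg => ?_
  constructor
  · intro hwin q hq
    rw [Set.eq_empty_iff_forall_notMem]
    rintro _ ⟨⟨n, rfl⟩, A, ⟨hA, hAL⟩, hT⟩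
    classical
    obtain ⟨q', h0, hs⟩ := exists_rec_seq (fun (h : List (Stat × Set Agt)) x =>
      if h.length < n then q (h.length + 1) else
        (G.Tab x.1 (σE h x), x.2 ∩ Susp G x.1 (G.Tab x.1 (σE h x)) (σE h x))) q₀
    simp only [List.length_map, List.length_range] at hs
    have hpre : ∀ k, k ≤ n → q' k = q k := by
      intro k hk
      cases k with
      | zero => rw [h0, hq.1]
      | succ k => rw [hs, if_pos (by omega)]
    have hcons : SGConsistent G σE q₀ q' := by
      refine ⟨h0, fun k => ?_⟩
      by_cases hk : k < n
      · have hm : (List.range k).map q' = (List.range k).map q := by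
          apply List.map_congr_left
          intro j hj
          exact hpre j (by have := List.mem_range.1 hj; omega)
        rw [hm, hpre k hk.le, hpre (k + 1) hk]
        exact hq.2 k
      · rw [hs k, if_neg hk]
    have hge : ∀ k, n ≤ k → A ∈ (q' k).2 := by
      intro k hk
      induction k, hk using Nat.le_induction with
      | base => rw [hpre n le_rfl]; exact hA
      | succ k hk ih =>
        rw [hs k, if_neg (by omega)]
        exact ⟨ih, _, hleg _ _ A, by rw [Function.update_eq_self]⟩
    have hanti : Antitone fun k => (q' k).2 := by
      apply antitone_nat_of_succ_le
      intro k
      rw [hcons.2 k]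
      exact Set.inter_subset_left
    have hall : ∀ k, A ∈ (q' k).2 := fun k =>
      hanti (le_max_left k n) (hge _ (le_max_right k n))
    have he := hwin q' hcons A ⟨Set.mem_iInter.2 hall, hAL⟩
    rw [Set.eq_empty_iff_forall_notMem] at he
    exact he (q n).1 ⟨⟨n, by simp only [hpre n le_rfl]⟩, hT⟩
  · intro hsafe q hq A hA
    have he := hsafe q hq
    rw [Set.eq_empty_iff_forall_notMem] at he ⊢
    rintro _ ⟨⟨n, rfl⟩, hT⟩
    exact he (q n) ⟨⟨n, rfl⟩, A, ⟨Set.mem_iInter.1 hA.1 n, hA.2⟩, hT⟩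
end

section
/- Let H be a finite turn-based two-player game between Eve and Adam, let σ be a strategy for Eve, and let s₀ be a state of H. Then there is a memoryless strategy σ' for Eve such that for every outcome ρ' of σ' from s₀ there exists an outcome ρ of σ from s₀ with Inf(ρ') ⊆ Inf(ρ). -/
/-- A turn-based two-player game between Eve and Adam: a directed graph whose
vertices are partitioned into Eve's vertices and Adam's vertices, every vertex
having at least one successor. -/
structure TBGame (V : Type) where
  isEve : V → Prop
  edge : V → V → Prop
  succ_nonempty : ∀ v, ∃ w, edge v w

namespace TBGame

variable {V : Type}

/-- A strategy for Eve maps each history (previously visited vertices together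
with the current vertex) ending in an Eve-vertex to a successor. -/
def IsEveStrat (H : TBGame V) (σ : List V → V → V) : Prop :=
  ∀ h v, H.isEve v → H.edge v (σ h v)

/-- An outcome of Eve's strategy `σ` from `s₀`: an infinite path from `s₀`
in which every step from an Eve-vertex follows `σ`. -/
def IsOutcome (H : TBGame V) (σ : List V → V → V) (s₀ : V) (ρ : ℕ → V) : Prop :=
  ρ 0 = s₀ ∧ (∀ n, H.edge (ρ n) (ρ (n + 1))) ∧
    ∀ n, H.isEve (ρ n) → ρ (n + 1) = σ ((List.range n).map ρ) (ρ n)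

end TBGame

/-- A strategy is memoryless if its value does not depend on the history. -/
def Memoryless {V : Type} (σ : List V → V → V) : Prop :=
  ∀ h h' v, σ h v = σ h' v

namespace TBGame

variable {V : Type}

def TPath (H : TBGame V) (τ : V → V) (ρ : ℕ → V) : Prop :=
  ∀ n, H.edge (ρ n) (ρ (n + 1)) ∧ (H.isEve (ρ n) → ρ (n + 1) = τ (ρ n))

def Good (H : TBGame V) (P : Set V → Prop) (X : Set V) : Prop :=
  ∃ τ : V → V, (∀ v, H.isEve v → H.edge v (τ v)) ∧ (∀ v ∈ X, H.isEve v → τ v ∈ X) ∧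
    (∀ v ∈ X, ¬ H.isEve v → ∀ w, H.edge v w → w ∈ X) ∧
    ∀ ρ, ρ 0 ∈ X → H.TPath τ ρ → P (InfOcc ρ)

theorem infOcc_shift (ρ : ℕ → V) (k : ℕ) : InfOcc (fun n => ρ (n + k)) = InfOcc ρ := by
  ext x
  constructor
  · intro h n
    obtain ⟨m, hm, e⟩ := h n
    exact ⟨m + k, by omega, e⟩
  · intro h n
    obtain ⟨m, hm, e⟩ := h (n + k)
    refine ⟨m - k, by omega, ?_⟩
    have : m - k + k = m := by omega
    simpa [this] using e

theorem good_extend (H : TBGame V) (P : Set V → Prop) (X S : Set V) (hX : H.Good P X)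
    (τ' : V → V)
    (hE : ∀ v ∈ S, v ∉ X → H.isEve v → H.edge v (τ' v) ∧ τ' v ∈ X ∪ S)
    (hA : ∀ v ∈ S, v ∉ X → ¬ H.isEve v → ∀ w, H.edge v w → w ∈ X ∪ S)
    (hP : ∀ ρ, (∀ n, ρ n ∈ S ∧ ρ n ∉ X) → H.TPath τ' ρ → P (InfOcc ρ)) :
    H.Good P (X ∪ S) := by
  classical
  obtain ⟨τ, h1, h2, h3, h4⟩ := hX
  let t : V → V := fun v => if v ∉ X ∧ v ∈ S then τ' v else τ v
  have tX : ∀ v ∈ X, t v = τ v := fun v hv => by simp [t, hv]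
  have tS : ∀ v ∈ S, v ∉ X → t v = τ' v := fun v hv hn => by simp [t, hv, hn]
  have cE : ∀ v ∈ X ∪ S, H.isEve v → t v ∈ X ∪ S := by
    intro v hv he
    by_cases hx : v ∈ X
    · rw [tX v hx]; exact Or.inl (h2 v hx he)
    · have hs : v ∈ S := hv.resolve_left hx
      rw [tS v hs hx]; exact (hE v hs hx he).2
  have cA : ∀ v ∈ X ∪ S, ¬ H.isEve v → ∀ w, H.edge v w → w ∈ X ∪ S := by
    intro v hv he w hw
    by_cases hx : v ∈ X
    · exact Or.inl (h3 v hx he w hw)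
    · exact hA v (hv.resolve_left hx) hx he w hw
  refine ⟨t, ?_, cE, cA, ?_⟩
  · intro v he
    by_cases h : v ∉ X ∧ v ∈ S
    · rw [tS v h.2 h.1]; exact (hE v h.2 h.1 he).1
    · simp only [t, h, if_false]; exact h1 v he
  · intro ρ h0 hρ
    have stay : ∀ n, ρ n ∈ X ∪ S := by
      intro n
      induction n with
      | zero => exact h0
      | succ n ih =>
        by_cases he : H.isEve (ρ n)
        · rw [(hρ n).2 he]; exact cE _ ih he
        · exact cA _ ih he _ (hρ n).1
    by_cases hk : ∃ k, ρ k ∈ X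
    · obtain ⟨k, hk⟩ := hk
      have stX : ∀ n, ρ (n + k) ∈ X := by
        intro n
        induction n with
        | zero => simpa using hk
        | succ n ih =>
          have e : n + 1 + k = n + k + 1 := by omega
          rw [e]
          by_cases he : H.isEve (ρ (n + k))
          · rw [(hρ _).2 he, tX _ ih]; exact h2 _ ih he
          · exact h3 _ ih he _ (hρ _).1
      rw [← infOcc_shift ρ k]
      refine h4 _ (stX 0) ?_
      intro n
      have e : n + 1 + k = n + k + 1 := by omega
      simp only [e]
      refine ⟨(hρ _).1, fun he => ?_⟩
      rw [(hρ _).2 he, tX _ (stX n)]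
    · push Not at hk
      have hs : ∀ n, ρ n ∈ S := fun n => (stay n).resolve_left (hk n)
      refine hP ρ (fun n => ⟨hs n, hk n⟩) (fun n => ⟨(hρ n).1, fun he => ?_⟩)
      rw [(hρ n).2 he, tS _ (hs n) (hk n)]

/-- `p.1` restricted to `[0, p.2]` is a finite history consistent with `σ` avoiding `X`. -/
def Valid (H : TBGame V) (σ : List V → V → V) (s₀ : V) (X : Set V) (p : (ℕ → V) × ℕ) : Prop :=
  p.1 0 = s₀ ∧ (∀ i ≤ p.2, p.1 i ∉ X) ∧ ∀ i < p.2, H.edge (p.1 i) (p.1 (i + 1)) ∧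
    (H.isEve (p.1 i) → p.1 (i + 1) = σ ((List.range i).map p.1) (p.1 i))

def Ext (p q : (ℕ → V) × ℕ) : Prop := p.2 ≤ q.2 ∧ ∀ i ≤ p.2, q.1 i = p.1 i

theorem Ext.trans {p q r : (ℕ → V) × ℕ} (h : Ext p q) (h' : Ext q r) : Ext p r :=
  ⟨h.1.trans h'.1, fun i hi => (h'.2 i (hi.trans h.1)).trans (h.2 i hi)⟩

theorem Ext.refl (p : (ℕ → V) × ℕ) : Ext p p := ⟨le_rfl, fun _ _ => rfl⟩

def Rch (H : TBGame V) (σ : List V → V → V) (s₀ : V) (X : Set V) (p : (ℕ → V) × ℕ) : Set V :=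
  {v | ∃ q, H.Valid σ s₀ X q ∧ Ext p q ∧ q.1 q.2 = v}

theorem map_range_congr {f g : ℕ → V} {i : ℕ} (h : ∀ j < i, f j = g j) :
    (List.range i).map f = (List.range i).map g := by
  apply List.map_congr_left
  intro a ha
  exact h a (List.mem_range.1 ha)

theorem valid_step (H : TBGame V) (σ : List V → V → V) (s₀ : V) (X : Set V)
    (p : (ℕ → V) × ℕ) (hp : H.Valid σ s₀ X p) (w : V) (hw : w ∉ X)
    (he : H.edge (p.1 p.2) w)
    (hs : H.isEve (p.1 p.2) → w = σ ((List.range p.2).map p.1) (p.1 p.2)) :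
    ∃ q, H.Valid σ s₀ X q ∧ Ext p q ∧ q.1 q.2 = w ∧ q.2 = p.2 + 1 := by
  obtain ⟨f, N⟩ := p
  obtain ⟨a, b, c⟩ := hp
  simp only at *
  let g : ℕ → V := fun i => if i ≤ N then f i else w
  have gl : ∀ i ≤ N, g i = f i := fun i hi => by simp [g, hi]
  have gw : g (N + 1) = w := by simp [g]
  refine ⟨(g, N + 1), ⟨?_, ?_, ?_⟩, ⟨by simp, gl⟩, gw, rfl⟩
  · simpa [gl 0 (Nat.zero_le _)] using a
  · intro i hi
    simp only at hi ⊢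
    rcases Nat.lt_or_ge N i with h | h
    · have : i = N + 1 := by omega
      rw [this, gw]; exact hw
    · rw [gl i h]; exact b i h
  · intro i hi
    simp only at hi ⊢
    have hm : (List.range i).map g = (List.range i).map f :=
      map_range_congr (fun j hj => gl j (by omega))
    rw [hm, gl i (by omega)]
    rcases Nat.lt_or_ge i N with h | h
    · rw [gl (i + 1) (by omega)]; exact c i h
    · have : i = N := by omega
      subst this
      rw [gw]; exact ⟨he, hs⟩

theorem limit_outcome (H : TBGame V) (σ : List V → V → V) (s₀ : V) (X : Set V)
    (s : ℕ → (ℕ → V) × ℕ) (hv : ∀ n, H.Valid σ s₀ X (s n))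
    (hx : ∀ n, Ext (s n) (s (n + 1))) (hl : ∀ n, (s n).2 < (s (n + 1)).2) :
    ∃ ρ, H.IsOutcome σ s₀ ρ ∧ ∀ n, ρ (s n).2 = (s n).1 (s n).2 := by
  have hN : ∀ n, n ≤ (s n).2 := by
    intro n
    induction n with
    | zero => simp
    | succ n ih => have := hl n; omega
  have hE : ∀ n k, Ext (s n) (s (n + k)) := by
    intro n k
    induction k with
    | zero => exact Ext.refl _
    | succ k ih => exact ih.trans (hx _)
  have hag : ∀ n i, i ≤ (s n).2 → (s i).1 i = (s n).1 i := by
    intro n i hi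
    rcases le_total n i with h | h
    · obtain ⟨k, rfl⟩ := Nat.exists_eq_add_of_le h
      exact (hE n k).2 _ hi
    · obtain ⟨k, rfl⟩ := Nat.exists_eq_add_of_le h
      exact ((hE i k).2 _ (hN i)).symm
  refine ⟨fun i => (s i).1 i, ⟨(hv 0).1, ?_, ?_⟩, fun n => hag n _ le_rfl⟩
  · intro n
    have h1 := hN (n + 1)
    simp only [hag (n + 1) n (by omega)]
    exact ((hv (n + 1)).2.2 n (by omega)).1
  · intro n
    have h1 := hN (n + 1)
    have hm : (List.range n).map (fun i => (s i).1 i) = (List.range n).map (s (n + 1)).1 :=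
      map_range_congr (fun j hj => hag (n + 1) j (by omega))
    simp only [hm, hag (n + 1) n (by omega)]
    exact ((hv (n + 1)).2.2 n (by omega)).2

end TBGame

open TBGame in
theorem exists_closed_set {V : Type} [Fintype V] (H : TBGame V) (σ : List V → V → V)
    (hσ : H.IsEveStrat σ) (s₀ : V) (X : Set V) (h0 : s₀ ∉ X)
    (hE : ∀ v, v ∉ X → H.isEve v → ∀ w, H.edge v w → w ∉ X)
    (hA : ∀ v, v ∉ X → ¬ H.isEve v → ∃ w, H.edge v w ∧ w ∉ X) :
    ∃ S : Set V, S.Nonempty ∧ (∀ v ∈ S, v ∉ X) ∧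
      (∀ v ∈ S, H.isEve v → ∃ w ∈ S, H.edge v w) ∧
      (∀ v ∈ S, ¬ H.isEve v → ∀ w, H.edge v w → w ∈ X ∪ S) ∧
      ∃ ρ, H.IsOutcome σ s₀ ρ ∧ S ⊆ InfOcc ρ := by
  classical
  have hne : ∃ n, ∃ p, H.Valid σ s₀ X p ∧ (H.Rch σ s₀ X p).ncard = n :=
    ⟨_, (fun _ => s₀, 0), ⟨rfl, fun i _ => h0, fun i hi => absurd hi (Nat.not_lt_zero _)⟩, rfl⟩
  obtain ⟨p, hp, hpn⟩ := Nat.find_spec hne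
  have hmin : ∀ q, H.Valid σ s₀ X q → Ext p q → H.Rch σ s₀ X q = H.Rch σ s₀ X p := by
    intro q hq hpq
    apply Set.eq_of_subset_of_ncard_le
    · rintro v ⟨r, hr, hqr, e⟩
      exact ⟨r, hr, hpq.trans hqr, e⟩
    · rw [hpn]; exact Nat.find_min' hne ⟨q, hq, rfl⟩
    · exact Set.toFinite _
  have hstep : ∀ q, H.Valid σ s₀ X q →
      ∃ r, H.Valid σ s₀ X r ∧ Ext q r ∧ r.2 = q.2 + 1 := by
    intro q hq
    have hqX := hq.2.1 q.2 le_rfl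
    by_cases he : H.isEve (q.1 q.2)
    · have hed := hσ ((List.range q.2).map q.1) _ he
      obtain ⟨r, a, b, _, d⟩ := valid_step H σ s₀ X q hq _ (hE _ hqX he _ hed) hed (fun _ => rfl)
      exact ⟨r, a, b, d⟩
    · obtain ⟨w, hw, hwX⟩ := hA _ hqX he
      obtain ⟨r, a, b, _, d⟩ := valid_step H σ s₀ X q hq w hwX hw (fun h => absurd h he)
      exact ⟨r, a, b, d⟩
  refine ⟨H.Rch σ s₀ X p, ⟨_, p, hp, Ext.refl p, rfl⟩, ?_, ?_, ?_, ?_⟩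
  · rintro v ⟨q, hq, _, rfl⟩
    exact hq.2.1 _ le_rfl
  · rintro v ⟨q, hq, hpq, rfl⟩ he
    have hqX := hq.2.1 q.2 le_rfl
    have hed := hσ ((List.range q.2).map q.1) _ he
    obtain ⟨r, a, b, c, d⟩ := valid_step H σ s₀ X q hq _ (hE _ hqX he _ hed) hed (fun _ => rfl)
    exact ⟨_, ⟨r, a, hpq.trans b, c⟩, hed⟩
  · rintro v ⟨q, hq, hpq, rfl⟩ he w hw
    by_cases hwX : w ∈ X
    · exact Or.inl hwX
    · obtain ⟨r, a, b, c, d⟩ := valid_step H σ s₀ X q hq w hwX hw (fun h => absurd h he)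
      exact Or.inr ⟨r, a, hpq.trans b, c⟩
  · have hnext : ∀ (v : V) (q : {q // H.Valid σ s₀ X q ∧ Ext p q}),
        ∃ r : {q // H.Valid σ s₀ X q ∧ Ext p q}, Ext q.1 r.1 ∧ q.1.2 < r.1.2 ∧
          (v ∈ H.Rch σ s₀ X p → r.1.1 r.1.2 = v) := by
      rintro v ⟨q, hq, hpq⟩
      obtain ⟨r, hr, hqr, hlt⟩ := hstep q hq
      by_cases hv : v ∈ H.Rch σ s₀ X p
      · rw [← hmin r hr (hpq.trans hqr)] at hv
        obtain ⟨t, ht, hrt, e⟩ := hv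
        refine ⟨⟨t, ht, (hpq.trans hqr).trans hrt⟩, hqr.trans hrt, ?_, fun _ => e⟩
        have := hrt.1
        simp only
        omega
      · exact ⟨⟨r, hr, hpq.trans hqr⟩, hqr, by simp only; omega, fun h => absurd h hv⟩
    choose nx hnx using hnext
    have : Nonempty V := ⟨s₀⟩
    obtain ⟨e, he⟩ := exists_surjective_nat V
    let s : ℕ → {q // H.Valid σ s₀ X q ∧ Ext p q} :=
      fun n => Nat.rec ⟨p, hp, Ext.refl p⟩ (fun k q => nx (e (Nat.unpair k).1) q) n
    have hs : ∀ n, s (n + 1) = nx (e (Nat.unpair n).1) (s n) := fun n => rfl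
    have hlt : ∀ n, (s n).1.2 < (s (n + 1)).1.2 := fun n => by
      rw [hs]; exact (hnx _ _).2.1
    obtain ⟨ρ, hρ, hρs⟩ := limit_outcome H σ s₀ X (fun n => (s n).1) (fun n => (s n).2.1)
      (fun n => by simp only [hs]; exact (hnx _ _).1) hlt
    refine ⟨ρ, hρ, ?_⟩
    intro v hv N
    obtain ⟨k, rfl⟩ := he v
    have hN : ∀ n, n ≤ (s n).1.2 := by
      intro n
      induction n with
      | zero => simp
      | succ n ih => have := hlt n; omega
    refine ⟨(s (Nat.pair k N + 1)).1.2, ?_, ?_⟩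
    · have := hN (Nat.pair k N + 1)
      have := Nat.right_le_pair k N
      omega
    · have h1 := hρs (Nat.pair k N + 1)
      rw [h1, hs, Nat.unpair_pair]
      exact (hnx _ _).2.2 hv

/-- In a finite turn-based two-player game, for every Eve
strategy `σ` and state `s₀`, there is a memoryless Eve strategy `σ'` such that
every outcome of `σ'` from `s₀` visits infinitely often only vertices that some
outcome of `σ` from `s₀` visits infinitely often. -/
theorem stmt12 {V : Type} [Fintype V] (H : TBGame V) (σ : List V → V → V)
    (hσ : H.IsEveStrat σ) (s₀ : V) :
    ∃ σ', H.IsEveStrat σ' ∧ Memoryless σ' ∧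
      ∀ ρ', H.IsOutcome σ' s₀ ρ' →
        ∃ ρ, H.IsOutcome σ s₀ ρ ∧ InfOcc ρ' ⊆ InfOcc ρ := by
  classical
  let P : Set V → Prop := fun A => ∃ ρ, H.IsOutcome σ s₀ ρ ∧ A ⊆ InfOcc ρ
  have hempty : H.Good P ∅ :=
    ⟨fun v => σ [] v, fun v he => hσ [] v he, by simp, by simp, by simp⟩
  obtain ⟨X, hX, hmax⟩ := (Set.toFinite {X | H.Good P X}).exists_maximal ⟨∅, hempty⟩
  have hmax' : ∀ S : Set V, H.Good P (X ∪ S) → S ⊆ X := fun S hS =>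
    Set.subset_union_right.trans (hmax hS Set.subset_union_left)
  by_cases h0 : s₀ ∈ X
  · obtain ⟨τ, h1, _, _, h4⟩ := hX
    refine ⟨fun _ v => τ v, fun _ v he => h1 v he, fun _ _ _ => rfl, ?_⟩
    rintro ρ ⟨a, b, c⟩
    exact h4 ρ (a ▸ h0) (fun n => ⟨b n, c n⟩)
  exfalso
  have hE : ∀ v, v ∉ X → H.isEve v → ∀ w, H.edge v w → w ∉ X := by
    intro v hv he w hw hwX
    refine hv (hmax' {v} (TBGame.good_extend H P X {v} hX (fun _ => w) ?_ ?_ ?_) rfl)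
    · rintro _ rfl _ _
      exact ⟨hw, Or.inl hwX⟩
    · rintro _ rfl _ h
      exact absurd he h
    · intro ρ hρ ht
      have e : ρ 0 = v := (hρ 0).1
      have e1 : ρ 1 = w := (ht 0).2 (e ▸ he)
      exact absurd (e1 ▸ hwX) (hρ 1).2
  have hA : ∀ v, v ∉ X → ¬ H.isEve v → ∃ w, H.edge v w ∧ w ∉ X := by
    intro v hv he
    by_contra! hcon
    refine hv (hmax' {v} (TBGame.good_extend H P X {v} hX id ?_ ?_ ?_) rfl)
    · rintro _ rfl _ h
      exact absurd h he
    · rintro _ rfl _ _ w hw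
      exact Or.inl (hcon w hw)
    · intro ρ hρ ht
      have e : ρ 0 = v := (hρ 0).1
      exact absurd (hcon _ (e ▸ (ht 0).1)) (hρ 1).2
  obtain ⟨S, ⟨v, hv⟩, hSX, hSE, hSA, ρ, hρ, hS⟩ := exists_closed_set H σ hσ s₀ X h0 hE hA
  have : ∀ v, ∃ w, v ∈ S → H.isEve v → w ∈ S ∧ H.edge v w := by
    intro v
    by_cases h : v ∈ S ∧ H.isEve v
    · obtain ⟨w, hw⟩ := hSE v h.1 h.2
      exact ⟨w, fun _ _ => hw⟩
    · exact ⟨v, fun a b => absurd ⟨a, b⟩ h⟩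
  choose t ht using this
  refine hSX v hv (hmax' S (TBGame.good_extend H P X S hX t ?_ ?_ ?_) hv)
  · intro v hv _ he
    exact ⟨(ht v hv he).2, Or.inr (ht v hv he).1⟩
  · intro v hv _ he
    exact hSA v hv he
  · intro ρ' hρ' _
    refine ⟨ρ, hρ, fun x hx => hS ?_⟩
    obtain ⟨m, _, rfl⟩ := hx 0
    exact (hρ' m).1
end

section
/- Let G be a finite concurrent game in which the preference relation of each player A is given by an ordered Büchi objective ω_A = ⟨(T^A_i)_{1≤i≤n_A}, ⊑_A⟩ with ⊑_A monotonic. If there is a trigger profile for a play π from a state s, then Eve has a memoryless winning strategy in the suspect game H(G,π) from the state (s, Agt). -/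
section Memoryless

variable {V M : Type}

/-- Validity of a finite prefix (indices up to `n`). -/
def PVal (E : V → M → V → Prop) (σ : List V → V → M) (n : ℕ) (p : ℕ → V) : Prop :=
  ∀ i < n, E (p i) (σ ((List.range i).map p) (p i)) (p (i + 1))

/-- Strict valid extension of a finite prefix by vertices of `Z`. -/
def PExt (E : V → M → V → Prop) (σ : List V → V → M) (Z : Set V) (c d : ℕ × (ℕ → V)) : Prop :=
  c.1 < d.1 ∧ (∀ i ≤ c.1, d.2 i = c.2 i) ∧ PVal E σ d.1 d.2 ∧
    ∀ i, c.1 < i → i ≤ d.1 → d.2 i ∈ Z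

/-- Vertices reachable by strict extensions. -/
def PReach (E : V → M → V → Prop) (σ : List V → V → M) (Z : Set V) (c : ℕ × (ℕ → V)) : Set V :=
  {v | ∃ d, PExt E σ Z c d ∧ d.2 d.1 = v}

theorem map_range_congr {p p' : ℕ → V} {n : ℕ} (h : ∀ i < n, p i = p' i) :
    (List.range n).map p = (List.range n).map p' :=
  List.map_congr_left (fun i hi => h i (List.mem_range.1 hi))

theorem PExt.trans {E : V → M → V → Prop} {σ : List V → V → M} {Z : Set V}
    {c d e : ℕ × (ℕ → V)} (h1 : PExt E σ Z c d) (h2 : PExt E σ Z d e) : PExt E σ Z c e := by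
  obtain ⟨a1, a2, a3, a4⟩ := h1
  obtain ⟨b1, b2, b3, b4⟩ := h2
  refine ⟨a1.trans b1, fun i hi => (b2 i (hi.trans a1.le)).trans (a2 i hi), b3, fun i hi hi' => ?_⟩
  by_cases h : i ≤ d.1
  · rw [b2 i h]; exact a4 i hi h
  · exact b4 i (not_le.1 h) hi'

theorem PExt.step {E : V → M → V → Prop} {σ : List V → V → M} {Z : Set V}
    {c : ℕ × (ℕ → V)} (hc : PVal E σ c.1 c.2) {w : V}
    (hw : E (c.2 c.1) (σ ((List.range c.1).map c.2) (c.2 c.1)) w) (hZ : w ∈ Z) :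
    PExt E σ Z c (c.1 + 1, Function.update c.2 (c.1 + 1) w) := by
  have key : ∀ i ≤ c.1, Function.update c.2 (c.1 + 1) w i = c.2 i := by
    intro i hi
    rw [Function.update_of_ne]; omega
  refine ⟨Nat.lt_succ_self _, key, ?_, ?_⟩
  · intro i hi
    have hi' : i ≤ c.1 := Nat.lt_succ_iff.1 hi
    simp only
    rw [map_range_congr (p' := c.2) (fun k hk => key k (by omega)), key i hi']
    rcases hi'.lt_or_eq with h | h
    · rw [key (i + 1) h]; exact hc i h
    · subst h; rw [Function.update_self]; exact hw
  · intro i h1 h2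
    have : i = c.1 + 1 := le_antisymm h2 h1
    subst this
    simpa using hZ

theorem infinite_play {E : V → M → V → Prop} {σ : List V → V → M} {Z Y : Set V} [Finite V]
    (hY : Y.Nonempty) (c : ℕ × (ℕ → V))
    (h : ∀ d, d = c ∨ PExt E σ Z c d → Y ⊆ PReach E σ Z d) :
    ∃ q : ℕ → V, q 0 = c.2 0 ∧ (∀ n, E (q n) (σ ((List.range n).map q) (q n)) (q (n + 1))) ∧
      Y ⊆ InfOcc q := by
  classical
  obtain ⟨y0, hy0⟩ := hY
  haveI : Nonempty Y := ⟨⟨y0, hy0⟩⟩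
  haveI : Countable V := Finite.to_countable
  obtain ⟨e, he⟩ : ∃ e : ℕ → Y × ℕ, Function.Surjective e := exists_surjective_nat _
  let C := {d : ℕ × (ℕ → V) // d = c ∨ PExt E σ Z c d}
  have hnext : ∀ (d : C) (y : Y), ∃ d' : C, PExt E σ Z d.1 d'.1 ∧ d'.1.2 d'.1.1 = y := by
    rintro ⟨d, hd⟩ y
    obtain ⟨d', h1, h2⟩ := h d hd y.2
    refine ⟨⟨d', Or.inr ?_⟩, h1, h2⟩
    rcases hd with rfl | hd
    · exact h1
    · exact hd.trans h1
  choose nx nx1 nx2 using hnext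
  let s : ℕ → C := fun k => Nat.rec ⟨c, Or.inl rfl⟩ (fun k d => nx d (e k).1) k
  have hs : ∀ k, s (k + 1) = nx (s k) (e k).1 := fun k => rfl
  have hE : ∀ k, PExt E σ Z (s k).1 (s (k + 1)).1 := fun k => by rw [hs]; exact nx1 _ _
  have hlen : ∀ k, k ≤ (s k).1.1 := by
    intro k
    induction k with
    | zero => exact Nat.zero_le _
    | succ k ih => exact lt_of_le_of_lt ih (hE k).1
  have hmon : ∀ k l, k ≤ l → (s k).1.1 ≤ (s l).1.1 ∧
      ∀ i ≤ (s k).1.1, (s l).1.2 i = (s k).1.2 i := by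
    intro k l hkl
    induction l, hkl using Nat.le_induction with
    | base => exact ⟨le_rfl, fun _ _ => rfl⟩
    | succ l hl ih =>
      refine ⟨ih.1.trans (hE l).1.le, fun i hi => ?_⟩
      rw [(hE l).2.1 i (hi.trans ih.1), ih.2 i hi]
  let q : ℕ → V := fun i => (s i).1.2 i
  have hq : ∀ k, ∀ i ≤ (s k).1.1, q i = (s k).1.2 i := by
    intro k i hi
    rcases le_total i k with hik | hik
    · exact ((hmon i k hik).2 i (hlen i)).symm
    · exact (hmon k i hik).2 i hi
  refine ⟨q, rfl, ?_, ?_⟩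
  · intro n
    have h1 := hlen (n + 1)
    have hv := (hE n).2.2.1 n h1
    rw [map_range_congr (p' := (s (n + 1)).1.2) (fun i hi => hq (n + 1) i (by omega)),
      hq (n + 1) n (by omega), hq (n + 1) (n + 1) h1]
    exact hv
  · intro y hy n
    -- infinitely many indices enumerate `y`
    have hinf : ∃ k, n ≤ k ∧ (e k).1 = ⟨y, hy⟩ := by
      by_contra hcon
      push Not at hcon
      have hi : Function.Injective (fun j : ℕ => ((⟨y, hy⟩ : Y), j)) := by
        intro a b hab
        exact (Prod.mk.inj hab).2
      have hfin : (Set.range (fun j : ℕ => ((⟨y, hy⟩ : Y), j))).Finite := by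
        refine ((Set.finite_lt_nat n).image e).subset ?_
        rintro _ ⟨j, rfl⟩
        obtain ⟨k, hk⟩ := he (⟨y, hy⟩, j)
        refine ⟨k, ?_, hk⟩
        by_contra hkn
        exact hcon k (not_lt.1 hkn) (by rw [hk])
      exact Set.infinite_range_of_injective hi hfin
    obtain ⟨k, hk, hky⟩ := hinf
    refine ⟨(s (k + 1)).1.1, ?_, ?_⟩
    · have := hlen (k + 1); omega
    · rw [hq (k + 1) _ le_rfl, hs, nx2, hky]

theorem memless [Finite V] (E : V → M → V → Prop) (L : V → M → Prop) (Bad : Set V → Prop)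
    (up : ∀ X Y, X ⊆ Y → Bad X → Bad Y) (hemp : ¬ Bad ∅)
    (σ : List V → V → M) (hL : ∀ h v, L v (σ h v)) (v0 : V)
    (win : ∀ q : ℕ → V, q 0 = v0 →
      (∀ n, E (q n) (σ ((List.range n).map q) (q n)) (q (n + 1))) → ¬ Bad (InfOcc q)) :
    ∃ f : V → M, (∀ v, L v (f v)) ∧ ∀ q : ℕ → V, q 0 = v0 →
      (∀ n, E (q n) (f (q n)) (q (n + 1))) → ¬ Bad (InfOcc q) := by
  classical
  let P : Set V → Prop := fun W => ∃ f : V → M, (∀ v, L v (f v)) ∧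
    (∀ v ∈ W, ∀ w, E v (f v) w → w ∈ W) ∧
    ∀ q : ℕ → V, q 0 ∈ W → (∀ n, E (q n) (f (q n)) (q (n + 1))) → ¬ Bad (InfOcc q)
  have hP0 : P ∅ := ⟨fun v => σ [] v, fun v => hL _ _, by simp, by simp⟩
  obtain ⟨W, hW, hmax⟩ : ∃ W, P W ∧ ∀ W', P W' → W ⊆ W' → W' ⊆ W := by
    obtain ⟨W, hW⟩ := (Set.toFinite {W | P W}).exists_maximal ⟨∅, hP0⟩
    exact ⟨W, hW.1, fun W' h1 h2 => hW.2 h1 h2⟩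
  obtain ⟨f, fL, fcl, fwin⟩ := hW
  by_cases hv0 : v0 ∈ W
  · exact ⟨f, fL, fun q hq => fwin q (hq ▸ hv0)⟩
  exfalso
  -- every valid prefix ending outside W has a bad reach set
  have hbad : ∀ c : ℕ × (ℕ → V), PVal E σ c.1 c.2 → c.2 c.1 ∉ W → Bad (PReach E σ Wᶜ c) := by
    intro c hc hcW
    by_contra hnb
    set Y := PReach E σ Wᶜ c with hYdef
    have hsucc : ∀ d : ℕ × (ℕ → V), d = c ∨ PExt E σ Wᶜ c d → ∀ w,
        E (d.2 d.1) (σ ((List.range d.1).map d.2) (d.2 d.1)) w → w ∈ Y ∪ W := by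
      intro d hd w hw
      by_cases hwW : w ∈ W
      · exact Or.inr hwW
      left
      have hdv : PVal E σ d.1 d.2 := by
        rcases hd with rfl | hd
        · exact hc
        · exact hd.2.2.1
      have hs := PExt.step (Z := Wᶜ) hdv hw hwW
      refine ⟨(d.1 + 1, Function.update d.2 (d.1 + 1) w), ?_, Function.update_self _ _ _⟩
      rcases hd with rfl | hd
      · exact hs
      · exact hd.trans hs
    have hch : ∀ x, ∃ m, L x m ∧ (x ∈ insert (c.2 c.1) Y → ∀ w, E x m w → w ∈ Y ∪ W) := by
      intro x
      by_cases hx : x ∈ insert (c.2 c.1) Y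
      · rcases hx with rfl | ⟨d, hd, rfl⟩
        · exact ⟨_, hL _ _, fun _ => hsucc c (Or.inl rfl)⟩
        · exact ⟨_, hL _ _, fun _ => hsucc d (Or.inr hd)⟩
      · exact ⟨_, hL [] x, fun h => absurd h hx⟩
    choose g gL hg using hch
    let f' : V → M := fun x => if x ∈ W then f x else g x
    have hstep : ∀ x ∈ W ∪ insert (c.2 c.1) Y, ∀ w, E x (f' x) w → w ∈ Y ∪ W := by
      intro x hx w hw
      by_cases hxW : x ∈ W
      · simp only [f', hxW, if_true] at hw
        exact Or.inr (fcl x hxW w hw)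
      · simp only [f', hxW, if_false] at hw
        exact hg x (hx.resolve_left hxW) w hw
    have hsub : Y ∪ W ⊆ W ∪ insert (c.2 c.1) Y := by
      rintro x (h | h)
      · exact Or.inr (Or.inr h)
      · exact Or.inl h
    have hP' : P (W ∪ insert (c.2 c.1) Y) := by
      refine ⟨f', ?_, fun v hv w hw => hsub (hstep v hv w hw), ?_⟩
      · intro v
        by_cases h : v ∈ W
        · simp only [f', h, if_true]; exact fL v
        · simp only [f', h, if_false]; exact gL v
      · intro q hq0 hq
        have hin : ∀ n, q n ∈ W ∪ insert (c.2 c.1) Y := by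
          intro n
          induction n with
          | zero => exact hq0
          | succ n ih => exact hsub (hstep _ ih _ (hq n))
        have hin' : ∀ n, q (n + 1) ∈ Y ∪ W := fun n => hstep _ (hin n) _ (hq n)
        by_cases hent : ∃ n, q n ∈ W
        · obtain ⟨n, hn⟩ := hent
          have hall : ∀ k, q (n + k) ∈ W := by
            intro k
            induction k with
            | zero => exact hn
            | succ k ih =>
              have := hq (n + k)
              simp only [f', ih, if_true] at this
              exact fcl _ ih _ this
          have hw := fwin (fun k => q (n + k)) hn (by
            intro k
            have := hq (n + k)
            simp only [f', hall k, if_true] at this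
            exact this)
          refine fun hb => hw (up _ _ ?_ hb)
          intro x hx k
          obtain ⟨m, hm, hmx⟩ := hx (n + k)
          refine ⟨m - n, by omega, ?_⟩
          simp only
          rw [show n + (m - n) = m by omega]; exact hmx
        · push Not at hent
          refine fun hb => hnb (up _ _ ?_ hb)
          intro x hx
          obtain ⟨m, hm, rfl⟩ := hx 1
          obtain ⟨k, rfl⟩ : ∃ k, m = k + 1 := ⟨m - 1, by omega⟩
          exact (hin' k).resolve_right (hent _)
    exact hcW (hmax _ hP' Set.subset_union_left (Or.inr (Or.inl rfl)))
  -- choose a prefix with minimal reach set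
  let S : Set (Set V) := {Y | ∃ c : ℕ × (ℕ → V), c.2 0 = v0 ∧ PVal E σ c.1 c.2 ∧ c.2 c.1 ∉ W ∧
    PReach E σ Wᶜ c = Y}
  obtain ⟨Y, hYm⟩ := (Set.toFinite S).exists_minimal
    ⟨_, (0, fun _ => v0), rfl, fun i hi => absurd hi (Nat.not_lt_zero i), hv0, rfl⟩
  obtain ⟨⟨c, hc0, hcv, hcW, hcY⟩, hmin⟩ := hYm
  have hYne : Y.Nonempty := by
    rw [Set.nonempty_iff_ne_empty]
    rintro rfl
    exact hemp (hcY ▸ hbad c hcv hcW)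
  obtain ⟨q, hq0, hq, hqY⟩ := infinite_play (E := E) (σ := σ) (Z := Wᶜ) hYne c (by
    rintro d (rfl | hd)
    · exact hcY.ge
    · refine hmin ⟨d, ?_, hd.2.2.1, hd.2.2.2 _ hd.1 le_rfl, rfl⟩ ?_
      · rw [hd.2.1 0 (Nat.zero_le _), hc0]
      · rw [← hcY]
        rintro v ⟨e, he, rfl⟩
        exact ⟨e, hd.trans he, rfl⟩)
  exact win q (hq0.trans hc0) hq (up _ _ hqY (hcY ▸ hbad c hcv hcW))

end Memoryless

/-- In a finite game with ordered Büchi objectives and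
monotonic preorders, if there is a trigger profile for `π` from `s`, then Eve
has a memoryless winning strategy in the suspect game `H(G,π)` from
`(s, Agt)`. -/
theorem stmt13 {Stat Agt Act : Type} [Fintype Stat] [Fintype Agt] [Fintype Act]
    [DecidableEq Agt] (G : ConcGame Stat Agt Act)
    (nA : Agt → ℕ)
    (T : (A : Agt) → Fin (nA A) → Set Stat)
    (le : (A : Agt) → Set (Fin (nA A)) → Set (Fin (nA A)) → Prop)
    (hrefl : ∀ A v, le A v v)
    (htrans : ∀ A u v w, le A u v → le A v w → le A u w)
    (hmono : ∀ A v w, v ⊆ w → le A v w)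
    -- the preference of each player is given by the ordered Büchi objective:
    (hpref : ∀ A χ χ', G.pref A χ χ' ↔
      le A {i | (InfOcc χ ∩ T A i).Nonempty} {i | (InfOcc χ' ∩ T A i).Nonempty})
    (s : Stat) (π : ℕ → Stat)
    (htrig : ∃ σ, IsTrigger G s π σ) :
    ∃ σE, EveLegal G σE ∧ (∀ h h' qq, σE h qq = σE h' qq) ∧
      WinningFrom G π σE (s, Set.univ) := by
  classical
  obtain ⟨σ, hσ, hσt⟩ := htrig
  let E : Stat × Set Agt → (Agt → Act) → Stat × Set Agt → Prop :=
    fun v m w => w.2 = v.2 ∩ Susp G v.1 w.1 m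
  let pay : (A : Agt) → Set (Fin (nA A)) := fun A => {i | (InfOcc π ∩ T A i).Nonempty}
  let Bad : Set (Stat × Set Agt) → Prop := fun X =>
    ∃ A, ¬ le A {i | ∃ x ∈ X, A ∈ x.2 ∧ x.1 ∈ T A i} (pay A)
  have up : ∀ X Y, X ⊆ Y → Bad X → Bad Y := by
    rintro X Y hXY ⟨A, hA⟩
    refine ⟨A, fun h => hA (htrans A _ _ _ (hmono A _ _ ?_) h)⟩
    rintro i ⟨x, hx, h2⟩
    exact ⟨x, hXY hx, h2⟩
  have hemp : ¬ Bad ∅ := by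
    rintro ⟨A, hA⟩
    exact hA (hmono A _ _ (by rintro i ⟨x, hx, _⟩; exact absurd hx (by simp)))
  -- on plays, badness of the infinity set is losing
  have hbad : ∀ (q : ℕ → Stat × Set Agt), (∀ n, (q (n + 1)).2 ⊆ (q n).2) →
      (¬ Bad (InfOcc q) ↔ WinningPlay G π q) := by
    intro q hdec
    have hanti : ∀ m n, m ≤ n → (q n).2 ⊆ (q m).2 := fun m n h =>
      antitone_nat_of_succ_le (f := fun n => (q n).2) hdec h
    have hset : ∀ A ∈ ⋂ n, (q n).2, ∀ i,
        (∃ x ∈ InfOcc q, A ∈ x.2 ∧ x.1 ∈ T A i) ↔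
          (InfOcc (fun n => (q n).1) ∩ T A i).Nonempty := by
      intro A hA i
      constructor
      · rintro ⟨x, hx, -, hxT⟩
        refine ⟨x.1, fun n => ?_, hxT⟩
        obtain ⟨m, hm, rfl⟩ := hx n
        exact ⟨m, hm, rfl⟩
      · rintro ⟨t, ht, htT⟩
        have hfr : ∃ᶠ n in Filter.atTop, ∃ x : Stat × Set Agt, x.1 = t ∧ q n = x := by
          rw [Filter.frequently_atTop]
          intro n
          obtain ⟨m, hm, h⟩ := ht n
          exact ⟨m, hm, q m, h, rfl⟩
        have hex : ∃ x : Stat × Set Agt, x.1 = t ∧ x ∈ InfOcc q := by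
          by_contra hcon
          push Not at hcon
          have : ∀ x : Stat × Set Agt, ∃ n, x.1 = t → ∀ m, n ≤ m → q m ≠ x := by
            intro x
            by_cases hx : x.1 = t
            · have := hcon x hx
              simp only [InfOcc, Set.mem_setOf_eq] at this
              push Not at this
              obtain ⟨n, hn⟩ := this
              exact ⟨n, fun _ => hn⟩
            · exact ⟨0, fun h => absurd h hx⟩
          choose N hN using this
          obtain ⟨B, hB⟩ := (Set.finite_range N).bddAbove
          obtain ⟨m, hm, h⟩ := ht B
          exact hN (q m) h m ((hB ⟨q m, rfl⟩).trans hm) rfl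
        obtain ⟨x, rfl, hx⟩ := hex
        refine ⟨x, hx, ?_, htT⟩
        obtain ⟨m, -, rfl⟩ := hx 0
        exact Set.mem_iInter.1 hA m
    constructor
    · intro hnb A hA
      rw [hpref]
      by_contra hle
      refine hnb ⟨A, ?_⟩
      rw [show {i | ∃ x ∈ InfOcc q, A ∈ x.2 ∧ x.1 ∈ T A i} =
        {i | (InfOcc (fun n => (q n).1) ∩ T A i).Nonempty} from Set.ext (hset A hA)]
      exact hle
    · rintro hw ⟨A, hA⟩
      by_cases hAm : A ∈ ⋂ n, (q n).2
      · have := (hpref _ _ _).1 (hw A hAm)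
        rw [show {i | ∃ x ∈ InfOcc q, A ∈ x.2 ∧ x.1 ∈ T A i} =
          {i | (InfOcc (fun n => (q n).1) ∩ T A i).Nonempty} from Set.ext (hset A hAm)] at hA
        exact hA this
      · refine hA (hmono A _ _ ?_)
        rintro i ⟨x, hx, hAx, -⟩
        exfalso
        apply hAm
        rw [Set.mem_iInter]
        intro n
        obtain ⟨m, hm, rfl⟩ := hx n
        exact hanti n m hm hAx
  obtain ⟨f, fL, fwin⟩ := memless E (fun v m => G.Legal v.1 m) Bad up hemp
    (fun h v A => σ A (h.map Prod.fst) v.1) (fun h v A => hσ A _ _) (s, Set.univ) (by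
      intro q hq0 hq
      rw [hbad q (fun n => (hq n).trans_subset Set.inter_subset_left)]
      intro A hA
      have hAn : ∀ n, A ∈ Susp G (q n).1 (q (n + 1)).1
          (fun B => σ B (((List.range n).map q).map Prod.fst) (q n).1) := by
        intro n
        have := Set.mem_iInter.1 hA (n + 1)
        rw [hq n] at this
        exact this.2
      choose a ha1 ha2 using hAn
      let τ : List Stat → Stat → Act := fun h t =>
        if t = (q h.length).1 then a h.length else (G.Allow_nonempty t A).some
      have hτ : G.IsStrategy A τ := by
        intro h t
        by_cases ht : t = (q h.length).1
        · simp only [τ, ht, if_true]; exact ha1 _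
        · simp only [τ, ht, if_false]; exact (G.Allow_nonempty t A).some_mem
      have hrun : ∀ n, G.run (Function.update σ A τ) s n =
          ((q n).1, ((List.range n).map q).map Prod.fst) := by
        intro n
        induction n with
        | zero => simp [ConcGame.run, hq0]
        | succ n ih =>
          simp only [ConcGame.run, ih]
          refine Prod.ext ?_ ?_
          · simp only
            rw [← ha2 n]
            congr 1
            funext B
            by_cases hB : B = A
            · subst hB
              simp [τ]
            · simp [Function.update_of_ne hB]
          · simp [List.range_succ]
      have := hσt A τ hτ
      rwa [show G.outcome (Function.update σ A τ) s = fun n => (q n).1 from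
        funext fun n => by simp [ConcGame.outcome, hrun]] at this)
  refine ⟨fun _ v => f v, fun _ v => fL v, fun _ _ _ => rfl, ?_⟩
  intro q hq
  exact (hbad q (fun n => (hq.2 n).trans_subset Set.inter_subset_left)).1 (fwin q hq.1 hq.2)
end

section
/- Let G and G' be two concurrent games with the same set Agt of players, let s₀ and s₀' be states of G and G' respectively, and let ⊑ be a game simulation between G and G' that is preference-preserving from (s₀, s₀'). If there exists a Nash equilibrium σ in G from s₀, then there exists a Nash equilibrium σ' in G' from s₀' with Out_G(s₀, σ) ⊑ Out_{G'}(s₀', σ') (componentwise). -/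
/-- A play of the transition system underlying `G`, starting at `s₀`. -/
def ConcGame.IsPlayFrom {Stat Agt Act : Type} (G : ConcGame Stat Agt Act)
    (s₀ : Stat) (ρ : ℕ → Stat) : Prop :=
  ρ 0 = s₀ ∧ ∀ n, ∃ m, G.Legal (ρ n) m ∧ G.Tab (ρ n) m = ρ (n + 1)

/-- Game simulation between two concurrent games over the same set of players. -/
def GameSim {Stat Agt Act Stat' Act' : Type} [DecidableEq Agt]
    (G : ConcGame Stat Agt Act) (G' : ConcGame Stat' Agt Act')
    (R : Stat → Stat' → Prop) : Prop :=
  ∀ s s', R s s' → ∀ m, G.Legal s m →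
    ∃ m', G'.Legal s' m' ∧ R (G.Tab s m) (G'.Tab s' m') ∧
      ∀ t', ∃ t, R t t' ∧ Susp G' s' t' m' ⊆ Susp G s t m

/-- A relation between the state spaces of two games is preference-preserving
from `(s₀, s₀')` if componentwise-related plays from these states are compared
identically by every player. -/
def PrefPres {Stat Agt Act Stat' Act' : Type}
    (G : ConcGame Stat Agt Act) (G' : ConcGame Stat' Agt Act')
    (R : Stat → Stat' → Prop) (s₀ : Stat) (s₀' : Stat') : Prop :=
  ∀ ρ₁ ρ₂ ρ'₁ ρ'₂, G.IsPlayFrom s₀ ρ₁ → G.IsPlayFrom s₀ ρ₂ →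
    G'.IsPlayFrom s₀' ρ'₁ → G'.IsPlayFrom s₀' ρ'₂ →
    (∀ i, R (ρ₁ i) (ρ'₁ i)) → (∀ i, R (ρ₂ i) (ρ'₂ i)) →
    ∀ A, (G.pref A ρ₁ ρ₂ ↔ G'.pref A ρ'₁ ρ'₂)

/-- A preference-preserving game simulation transports Nash
equilibria: if `σ` is a Nash equilibrium of `G` from `s₀`, then `G'` has a Nash
equilibrium `σ'` from `s₀'` whose outcome is componentwise related to that of
`σ`. -/
theorem stmt14 {Stat Agt Act Stat' Act' : Type} [DecidableEq Agt]
    (G : ConcGame Stat Agt Act) (G' : ConcGame Stat' Agt Act')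
    (hrefl : ∀ A χ, G.pref A χ χ)
    (htrans : ∀ A χ₁ χ₂ χ₃, G.pref A χ₁ χ₂ → G.pref A χ₂ χ₃ → G.pref A χ₁ χ₃)
    (hrefl' : ∀ A χ, G'.pref A χ χ)
    (htrans' : ∀ A χ₁ χ₂ χ₃, G'.pref A χ₁ χ₂ → G'.pref A χ₂ χ₃ → G'.pref A χ₁ χ₃)
    (R : Stat → Stat' → Prop) (s₀ : Stat) (s₀' : Stat') (hR : R s₀ s₀')
    (hsim : GameSim G G' R) (hpp : PrefPres G G' R s₀ s₀')
    (σ : Agt → List Stat → Stat → Act) (hσ : G.IsNash s₀ σ) :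
    ∃ σ' : Agt → List Stat' → Stat' → Act', G'.IsNash s₀' σ' ∧
      ∀ i, R (G.outcome σ s₀ i) (G'.outcome σ' s₀' i) := by
  classical
  obtain ⟨hprof, hnash⟩ := hσ
  have key : ∀ (s : Stat) (s' : Stat') (m : Agt → Act), ∃ (m' : Agt → Act') (f : Stat' → Stat),
      G'.Legal s' m' ∧ (R s s' → G.Legal s m →
        (f (G'.Tab s' m') = G.Tab s m ∧
          ∀ t', R (f t') t' ∧ Susp G' s' t' m' ⊆ Susp G s (f t') m)) := by
    intro s s' m
    by_cases h : R s s' ∧ G.Legal s m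
    · obtain ⟨m', hm', hT, ht⟩ := hsim s s' h.1 m h.2
      choose f hf hf2 using ht
      refine ⟨m', fun t' => if t' = G'.Tab s' m' then G.Tab s m else f t', hm', ?_⟩
      intro _ _
      refine ⟨by simp, ?_⟩
      intro t'
      by_cases e : t' = G'.Tab s' m'
      · simp only [e, if_true]
        refine ⟨hT, ?_⟩
        intro A _
        exact ⟨m A, h.2 A, by simp⟩
      · simp only [e, if_false]
        exact ⟨hf t', hf2 t'⟩
    · refine ⟨fun A => (G'.Allow_nonempty s' A).some, fun _ => s,
        fun A => (G'.Allow_nonempty s' A).some_mem, ?_⟩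
      intro h1 h2
      exact absurd ⟨h1, h2⟩ h
  choose M F hM hF using key
  let mv : List Stat × Stat × Stat' → Agt → Act := fun q A => σ A q.1 q.2.1
  have hmv : ∀ q, G.Legal q.2.1 (mv q) := fun q A => hprof A _ _
  let step : List Stat × Stat × Stat' → Stat' → List Stat × Stat × Stat' :=
    fun q t' => (q.1 ++ [q.2.1], F q.2.1 q.2.2 (mv q) t', t')
  let sim : List Stat' → Stat' → List Stat × Stat × Stat' :=
    fun h s => List.foldl step ([], s₀, s₀') (h ++ [s]).tail
  let σ' : Agt → List Stat' → Stat' → Act' :=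
    fun A h s => M (sim h s).2.1 s (mv (sim h s)) A
  have hσ' : G'.IsProfile σ' := fun A h s => hM _ _ _ A
  have play : ∀ π, G.IsProfile π → G.IsPlayFrom s₀ (G.outcome π s₀) := by
    intro π hπ
    exact ⟨rfl, fun n => ⟨_, fun A => hπ A _ _, rfl⟩⟩
  have play' : ∀ π, G'.IsProfile π → G'.IsPlayFrom s₀' (G'.outcome π s₀') := by
    intro π hπ
    exact ⟨rfl, fun n => ⟨_, fun A => hπ A _ _, rfl⟩⟩
  let Q : (Agt → List Stat' → Stat' → Act') → ℕ → List Stat × Stat × Stat' :=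
    fun π n => sim (G'.run π s₀' n).2 (G'.run π s₀' n).1
  have Q0 : ∀ π, Q π 0 = ([], s₀, s₀') := fun π => rfl
  have Qs : ∀ π n, Q π (n + 1) = step (Q π n) (G'.outcome π s₀' (n + 1)) := by
    intro π n
    have : ∀ (l : List Stat') (a b : Stat'), ((l ++ [a]) ++ [b]).tail = (l ++ [a]).tail ++ [b] := by
      intro l a b
      cases l <;> simp
    change List.foldl step _ (((G'.run π s₀' n).2 ++ [(G'.run π s₀' n).1]) ++ [_]).tail = _
    rw [this, List.foldl_append]
    rfl
  have Q2 : ∀ π n, (Q π n).2.2 = G'.outcome π s₀' n := by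
    intro π n
    cases n with
    | zero => rfl
    | succ n => rw [Qs]
  have QR : ∀ π n, R (Q π n).2.1 (G'.outcome π s₀' n) := by
    intro π n
    induction n with
    | zero => exact hR
    | succ n ih =>
      rw [Qs]
      have := Q2 π n
      rw [← this] at ih
      exact ((hF _ _ _ ih (hmv _)).2 _).1
  have Ql : ∀ π n, (Q π n).1.length = n := by
    intro π n
    induction n with
    | zero => rfl
    | succ n ih => rw [Qs]; simp [step, ih]
  have main : ∀ n, G.run σ s₀ n = ((Q σ' n).2.1, (Q σ' n).1) := by
    intro n
    induction n with
    | zero => rfl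
    | succ n ih =>
      have h1 := (hF _ _ _ (QR σ' n) (hmv (Q σ' n))).1
      rw [Qs]
      simp only [ConcGame.run, ih, step]
      rw [Q2]
      exact congrArg (fun x => (x, _)) h1.symm
  have mainR : ∀ i, R (G.outcome σ s₀ i) (G'.outcome σ' s₀' i) := by
    intro i
    have := QR σ' i
    rw [ConcGame.outcome, main]
    exact this
  refine ⟨σ', ⟨hσ', ?_⟩, mainR⟩
  intro A τ' hτ'
  let π := Function.update σ' A τ'
  have hπ : G'.IsProfile π := by
    intro B
    by_cases e : B = A
    · subst e; simpa [π] using hτ'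
    · simpa [π, e] using hσ' B
  have hs : ∀ n, A ∈ Susp G (Q π n).2.1 (Q π (n + 1)).2.1 (mv (Q π n)) := by
    intro n
    have h2 := ((hF _ _ _ (QR π n) (hmv (Q π n))).2 (G'.outcome π s₀' (n + 1))).2
    rw [Qs]
    simp only [step]
    rw [Q2]
    apply h2
    refine ⟨τ' (G'.run π s₀' n).2 (G'.run π s₀' n).1, hτ' _ _, ?_⟩
    change _ = G'.Tab (G'.run π s₀' n).1 _
    congr 1
    funext B
    by_cases e : B = A
    · subst e; simp [π]
    · simp only [π, Function.update_of_ne e]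
      rfl
  choose a ha ha2 using hs
  let τ : List Stat → Stat → Act := fun h s =>
    if a h.length ∈ G.Allow s A then a h.length else σ A h s
  have hτ : G.IsStrategy A τ := by
    intro h s
    by_cases e : a h.length ∈ G.Allow s A
    · simpa [τ, e] using e
    · simpa [τ, e] using hprof A h s
  have hp : G.IsProfile (Function.update σ A τ) := by
    intro B
    by_cases e : B = A
    · subst e; simpa using hτ
    · simpa [e] using hprof B
  have dev : ∀ n, G.run (Function.update σ A τ) s₀ n = ((Q π n).2.1, (Q π n).1) := by
    intro n
    induction n with
    | zero => rfl
    | succ n ih =>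
      have e1 : (Q π (n + 1)).1 = (Q π n).1 ++ [(Q π n).2.1] := by rw [Qs]
      rw [e1, ← ha2 n]
      simp only [ConcGame.run, ih]
      congr 2
      funext B
      by_cases e : B = A
      · subst e
        simp [τ, Ql, ha n]
      · simp [e, mv]
  have devR : ∀ i, R (G.outcome (Function.update σ A τ) s₀ i) (G'.outcome π s₀' i) := by
    intro i
    have := QR π i
    rw [ConcGame.outcome, dev]
    exact this
  exact (hpp _ _ _ _ (play _ hp) (play _ hprof) (play' _ hπ) (play' _ hσ') devR mainR A).1
    (hnash A τ hτ)
end
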